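/- arXiv:1604.02407 — 2 statements merged into one kernel-verified Lean document; each statement's English description precedes it below -/
import Mathlib

section
/- Let W : ℝ → [0,∞) satisfy hypotheses (w1)–(w4) with W of class C², let q* be the constant of the one-dimensional interpolation inequality and let 0 ≤ q < q*/4. Then there exist constants δ₀, C > 0 such that the following holds. Let I = (a,b) be an open interval with ℒ¹(I) > 1, and let α = (α₀, α₁), β = (β₀, β₁) ∈ ℝ² with ‖α‖, ‖β‖ ≤ δ < δ₀. Then there exists a C⁴ function v₋ : [a,b] → ℝ with v₋(a) = −1 + α₀, v₋'(a) = α₁, v₋(b) = −1 + β₀, v₋'(b) = β₁, which minimizes E(·; I) among all C² functions satisfying these four boundary conditions, solves the Euler–Lagrange equation 2 v₋⁗ + 2q v₋'' + W'(v₋) = 0 on (a,b), and satisfies: ‖v₋ + 1‖_{L∞(I)} ≤ C δ; ‖v₋^{(k)}‖_{L²(I)} ≤ C δ for k = 1,…,4; and ‖v₋^{(k)}‖_{L∞(I)} ≤ C δ for k = 1,…,3. -/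
open MeasureTheory Real

/-- Hypotheses (w1)–(w4) on the double-well potential. -/
def DoubleWell (W : ℝ → ℝ) : Prop :=
  ContDiff ℝ 5 W ∧ (∀ s, W s = W (-s)) ∧ (∀ s, 0 ≤ W s) ∧
  (∀ s, 0 ≤ s → s ≠ 1 → 0 < W s) ∧ W 1 = 0 ∧ deriv W 1 = 0 ∧
  ∃ cW : ℝ, 0 < cW ∧ cW ≤ 1 ∧ ∀ s, 0 ≤ s → cW * |s - 1|^2 ≤ W s

/-- Rescaled energy `E(v; (a,b))`. -/
noncomputable def Eres (W : ℝ → ℝ) (q : ℝ) (v : ℝ → ℝ) (a b : ℝ) : ℝ :=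
  ∫ x in a..b, (W (v x) - q * (deriv v x)^2 + (deriv (deriv v) x)^2)

/-- `φ i` is the `i`-th derivative of `φ 0` for `i ≤ n`, and `φ n` is continuous. -/
structure DerivChain (n : ℕ) (φ : ℕ → ℝ → ℝ) : Prop where
  hasDerivAt : ∀ i < n, ∀ x, HasDerivAt (φ i) (φ (i + 1) x) x
  continuous_last : Continuous (φ n)

namespace DerivChain

variable {n : ℕ} {φ ψ : ℕ → ℝ → ℝ}

theorem continuous (h : DerivChain n φ) {i : ℕ} (hi : i ≤ n) : Continuous (φ i) := by
  rcases hi.lt_or_eq with hi | rfl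
  · exact continuous_iff_continuousAt.2 fun x => (h.hasDerivAt i hi x).continuousAt
  · exact h.continuous_last

theorem shift {m i : ℕ} (h : DerivChain n φ) (hi : i + m ≤ n) :
    DerivChain m (fun j => φ (i + j)) :=
  ⟨fun j hj x => h.hasDerivAt (i + j) (by omega) x, h.continuous hi⟩

theorem mono {m : ℕ} (h : DerivChain n φ) (hm : m ≤ n) : DerivChain m φ :=
  ⟨fun j hj x => h.hasDerivAt j (by omega) x, h.continuous hm⟩

theorem sub (h : DerivChain n φ) (h' : DerivChain n ψ) : DerivChain n (φ - ψ) :=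
  ⟨fun j hj x => (h.hasDerivAt j hj x).sub (h'.hasDerivAt j hj x),
    h.continuous_last.sub h'.continuous_last⟩

theorem iteratedDeriv_eq (h : DerivChain n φ) {i : ℕ} (hi : i ≤ n) :
    iteratedDeriv i (φ 0) = φ i := by
  induction i with
  | zero => exact iteratedDeriv_zero
  | succ i ih =>
    rw [iteratedDeriv_succ, ih (by omega)]
    exact funext fun x => (h.hasDerivAt i (by omega) x).deriv

theorem contDiff (h : DerivChain n φ) : ContDiff ℝ n (φ 0) := by
  refine contDiff_nat_iff_iteratedDeriv.2 ⟨fun m hm => ?_, fun m hm => ?_⟩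
  · rw [h.iteratedDeriv_eq hm]
    exact h.continuous hm
  · rw [h.iteratedDeriv_eq hm.le]
    exact fun x => (h.hasDerivAt m hm x).differentiableAt

theorem of_contDiff {u : ℝ → ℝ} (h : ContDiff ℝ n u) :
    DerivChain n (fun i => iteratedDeriv i u) := by
  refine ⟨fun i hi x => ?_, h.continuous_iteratedDeriv n le_rfl⟩
  have := (h.differentiable_iteratedDeriv i (by exact_mod_cast hi)) x
  simpa only [iteratedDeriv_succ] using this.hasDerivAt

theorem const_add {m : ℕ} (c : ℝ) (h : DerivChain (m + 1) φ) :
    DerivChain (m + 1) (fun i x => if i = 0 then c + φ 0 x else φ i x) := by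
  refine ⟨fun i hi x => ?_, by simpa using h.continuous_last⟩
  by_cases hi0 : i = 0
  · subst hi0
    simpa using (h.hasDerivAt 0 hi x).const_add c
  · simpa [hi0] using h.hasDerivAt i hi x

theorem const_mul (c : ℝ) (h : DerivChain n φ) : DerivChain n (fun i x => c * φ i x) :=
  ⟨fun i hi x => (h.hasDerivAt i hi x).const_mul c, h.continuous_last.const_mul c⟩

end DerivChain

/-- A continuously differentiable function varies in square by at most its `H¹` norm. -/
theorem sq_le_sq_add_integral {f f' : ℝ → ℝ} (hf : ∀ x, HasDerivAt f (f' x) x)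
    (hf' : Continuous f') {a b x y : ℝ} (hx : x ∈ Set.Icc a b) (hy : y ∈ Set.Icc a b) :
    f x ^ 2 ≤ f y ^ 2 + ((∫ t in a..b, f t ^ 2) + ∫ t in a..b, f' t ^ 2) := by
  have hc : Continuous f := continuous_iff_continuousAt.2 fun x => (hf x).continuousAt
  have hab : a ≤ b := hx.1.trans hx.2
  have hftc : ∫ t in y..x, 2 * f t * f' t = f x ^ 2 - f y ^ 2 := by
    refine intervalIntegral.integral_eq_sub_of_hasDerivAt (f := fun t => f t ^ 2)
      (fun t _ => ?_) (Continuous.intervalIntegrable (by fun_prop) _ _)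
    simpa using (hf t).fun_pow 2
  rw [← intervalIntegral.integral_add (Continuous.intervalIntegrable (by fun_prop) _ _)
    (Continuous.intervalIntegrable (by fun_prop) _ _)]
  have hle : ∫ t in y..x, 2 * f t * f' t ≤ ∫ t in a..b, (f t ^ 2 + f' t ^ 2) := by
    calc ∫ t in y..x, 2 * f t * f' t ≤ |∫ t in y..x, 2 * f t * f' t| := le_abs_self _
      _ ≤ |∫ t in y..x, (f t ^ 2 + f' t ^ 2)| := by
        rw [← Real.norm_eq_abs]
        refine intervalIntegral.norm_integral_le_abs_of_norm_le
          (Filter.Eventually.of_forall fun t => ?_)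
          (Continuous.intervalIntegrable (by fun_prop) _ _)
        rw [Real.norm_eq_abs, abs_le]
        constructor <;> nlinarith [sq_nonneg (f t + f' t), sq_nonneg (f t - f' t)]
      _ ≤ |∫ t in a..b, (f t ^ 2 + f' t ^ 2)| := by
        refine intervalIntegral.abs_integral_mono_interval ?_
          (Filter.Eventually.of_forall fun t => by positivity)
          (Continuous.intervalIntegrable (by fun_prop) _ _)
        rw [Set.uIoc_of_le hab]
        intro t ht
        rcases Set.mem_uIoc.1 ht with h | h
        · exact ⟨hy.1.trans_lt h.1, h.2.trans hx.2⟩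
        · exact ⟨hx.1.trans_lt h.1, h.2.trans hy.2⟩
      _ = ∫ t in a..b, (f t ^ 2 + f' t ^ 2) :=
        abs_of_nonneg (intervalIntegral.integral_nonneg hab fun t _ => by positivity)
  linarith

/-- The one-dimensional Sobolev embedding `H¹ ⊂ L∞` on intervals of length at least one. -/
theorem sq_le_integral_of_one_le {f f' : ℝ → ℝ} (hf : ∀ x, HasDerivAt f (f' x) x)
    (hf' : Continuous f') {a b x : ℝ} (hab : 1 ≤ b - a) (hx : x ∈ Set.Icc a b) :
    f x ^ 2 ≤ 2 * (∫ t in a..b, f t ^ 2) + ∫ t in a..b, f' t ^ 2 := by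
  have hc : Continuous f := continuous_iff_continuousAt.2 fun x => (hf x).continuousAt
  have hab' : a ≤ b := by linarith
  obtain ⟨y, hy, hmin⟩ := isCompact_Icc.exists_isMinOn (Set.nonempty_Icc.2 hab')
    (hc.pow 2).continuousOn
  have h1 : ∫ _t in a..b, f y ^ 2 ≤ ∫ t in a..b, f t ^ 2 :=
    intervalIntegral.integral_mono_on hab' (by simp)
      (Continuous.intervalIntegrable (by fun_prop) _ _) fun t ht => hmin ht
  rw [intervalIntegral.integral_const, smul_eq_mul] at h1
  have h2 := sq_le_sq_add_integral hf hf' hx hy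
  nlinarith [sq_nonneg (f y)]

/-- An interpolation inequality on short intervals sums up to one on long intervals. -/
theorem integral_le_of_partition {f g h : ℝ → ℝ} (hf : Continuous f) (hg : Continuous g)
    (hh : Continuous h) (hg0 : ∀ x, 0 ≤ g x) (hh0 : ∀ x, 0 ≤ h x) {c : ℝ}
    (hloc : ∀ a b, a < b → c * ∫ x in a..b, f x ≤
      (1 / (b - a) ^ 2) * (∫ x in a..b, g x) + (b - a) ^ 2 * ∫ x in a..b, h x)
    {a b : ℝ} (hab : 1 ≤ b - a) :
    c * ∫ x in a..b, f x ≤ (∫ x in a..b, g x) + 4 * ∫ x in a..b, h x := by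
  set n := ⌊b - a⌋₊ with hn
  have hn1 : 1 ≤ n := Nat.le_floor (by simpa using hab)
  have hn1' : (1 : ℝ) ≤ n := by exact_mod_cast hn1
  have hn0 : (0 : ℝ) < n := by linarith
  have hle : (n : ℝ) ≤ b - a := Nat.floor_le (by linarith)
  have hlt : b - a < n + 1 := Nat.lt_floor_add_one _
  set l := (b - a) / n with hl
  have hl1 : 1 ≤ l := by rw [hl, le_div_iff₀ hn0]; linarith
  have hl2 : l ≤ 2 := by rw [hl, div_le_iff₀ hn0]; linarith
  let t : ℕ → ℝ := fun k => a + k * l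
  have ht0 : t 0 = a := by simp [t]
  have htn : t n = b := by simp only [t, hl]; field_simp; ring
  have hsum : ∀ F : ℝ → ℝ, Continuous F →
      ∫ x in a..b, F x = ∑ k ∈ Finset.range n, ∫ x in t k..t (k + 1), F x := by
    intro F hF
    rw [intervalIntegral.sum_integral_adjacent_intervals
      (fun k _ => hF.intervalIntegrable _ _), ht0, htn]
  rw [hsum f hf, hsum g hg, hsum h hh, Finset.mul_sum, Finset.mul_sum, ← Finset.sum_add_distrib]
  refine Finset.sum_le_sum fun k _ => ?_
  have hstep : t (k + 1) - t k = l := by simp only [t]; push_cast; ring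
  have hlt' : t k < t (k + 1) := by linarith
  have := hloc (t k) (t (k + 1)) hlt'
  rw [hstep] at this
  have hG : 0 ≤ ∫ x in t k..t (k + 1), g x :=
    intervalIntegral.integral_nonneg hlt'.le fun x _ => hg0 x
  have hH : 0 ≤ ∫ x in t k..t (k + 1), h x :=
    intervalIntegral.integral_nonneg hlt'.le fun x _ => hh0 x
  have h1 : 1 / l ^ 2 ≤ 1 := by
    rw [div_le_one (by positivity)]
    nlinarith
  have h2 : l ^ 2 ≤ 4 := by nlinarith
  have h3 := mul_le_mul_of_nonneg_right h1 hG
  have h4 := mul_le_mul_of_nonneg_right h2 hH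
  linarith

/-- A lower bound on the second derivative bounds the first-order Taylor remainder from below. -/
theorem le_taylor_remainder {V V₁ V₂ : ℝ → ℝ} (h₁ : ∀ x, HasDerivAt V (V₁ x) x)
    (h₂ : ∀ x, HasDerivAt V₁ (V₂ x) x) {a b m : ℝ} (hm : ∀ x ∈ Set.Icc a b, m ≤ V₂ x)
    {s t : ℝ} (hs : s ∈ Set.Icc a b) (ht : t ∈ Set.Icc a b) :
    m / 2 * (t - s) ^ 2 ≤ V t - V s - V₁ s * (t - s) := by
  let F : ℝ → ℝ := fun x => V x - V s - V₁ s * (x - s) - m / 2 * (x - s) ^ 2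
  let F₁ : ℝ → ℝ := fun x => V₁ x - V₁ s - m * (x - s)
  have hF : ∀ x, HasDerivAt F (F₁ x) x := by
    intro x
    have hid : HasDerivAt (fun x : ℝ => x - s) 1 x := (hasDerivAt_id x).sub_const s
    convert! (((h₁ x).sub_const (V s)).sub (hid.const_mul (V₁ s))).sub
      ((hid.pow 2).const_mul (m / 2)) using 1
    simp only [F₁]
    push_cast
    ring
  have hF₁ : ∀ x, HasDerivAt F₁ (V₂ x - m) x := by
    intro x
    have hid : HasDerivAt (fun x : ℝ => x - s) 1 x := (hasDerivAt_id x).sub_const s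
    convert! ((h₂ x).sub_const (V₁ s)).sub (hid.const_mul m) using 1
    ring
  have hcF : Continuous F := continuous_iff_continuousAt.2 fun x => (hF x).continuousAt
  have hcF₁ : Continuous F₁ := continuous_iff_continuousAt.2 fun x => (hF₁ x).continuousAt
  have hmono : MonotoneOn F₁ (Set.Icc a b) := by
    refine monotoneOn_of_hasDerivWithinAt_nonneg (convex_Icc a b) hcF₁.continuousOn
      (fun x _ => (hF₁ x).hasDerivWithinAt) fun x hx => ?_
    have := hm x (interior_subset hx)
    linarith
  have hF₁s : F₁ s = 0 := by simp [F₁]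
  have hFs : F s = 0 := by simp [F]
  suffices h : 0 ≤ F t by simp only [F] at h; linarith
  rw [← hFs]
  rcases le_total s t with hst | hst
  · refine (monotoneOn_of_hasDerivWithinAt_nonneg (convex_Icc s t) hcF.continuousOn
      (fun x _ => (hF x).hasDerivWithinAt) fun x hx => ?_) (Set.left_mem_Icc.2 hst)
      (Set.right_mem_Icc.2 hst) hst
    have hx := interior_subset hx
    rw [← hF₁s]
    exact hmono hs ⟨hs.1.trans hx.1, hx.2.trans ht.2⟩ hx.1
  · refine (antitoneOn_of_hasDerivWithinAt_nonpos (convex_Icc t s) hcF.continuousOn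
      (fun x _ => (hF x).hasDerivWithinAt) fun x hx => ?_) (Set.left_mem_Icc.2 hst)
      (Set.right_mem_Icc.2 hst) hst
    have hx := interior_subset hx
    rw [← hF₁s]
    exact hmono ⟨ht.1.trans hx.1, hx.2.trans hs.2⟩ hs hx.2
/-- The quadratic interpolation inequality on intervals of length at least one. -/
def HasInterp (c k : ℝ) : Prop :=
  ∀ a b : ℝ, 1 ≤ b - a → ∀ φ : ℕ → ℝ → ℝ, DerivChain 2 φ →
    c * ∫ x in a..b, φ 1 x ^ 2 ≤ k * (∫ x in a..b, φ 0 x ^ 2) + 4 * ∫ x in a..b, φ 2 x ^ 2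

/-- The interpolation inequality for a potential with a quadratic zero at the origin passes to
the quadratic inequality by scaling. -/
theorem hasInterp_of_potential {V : ℝ → ℝ} (hV : Continuous V) {c k η : ℝ} (hk : 0 ≤ k)
    (hη : 0 < η) (hVk : ∀ s, |s| ≤ η → V s ≤ k * s ^ 2)
    (hloc : ∀ a b : ℝ, a < b → ∀ φ : ℕ → ℝ → ℝ, DerivChain 2 φ →
      c * ∫ x in a..b, φ 1 x ^ 2 ≤ (1 / (b - a) ^ 2) * (∫ x in a..b, V (φ 0 x)) +
        (b - a) ^ 2 * ∫ x in a..b, φ 2 x ^ 2) :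
    HasInterp c k := by
  intro a b hab φ hφ
  have h0 := hφ.continuous (i := 0) (by norm_num)
  have h1 := hφ.continuous (i := 1) (by norm_num)
  have h2 := hφ.continuous (i := 2) le_rfl
  rw [← intervalIntegral.integral_const_mul k]
  refine integral_le_of_partition (f := fun x => φ 1 x ^ 2) (g := fun x => k * φ 0 x ^ 2)
    (h := fun x => φ 2 x ^ 2) (h1.pow 2) (by fun_prop) (h2.pow 2) (fun x => by positivity)
    (fun x => by positivity) ?_ hab
  intro a b hab
  obtain ⟨B, hB⟩ := isCompact_Icc.exists_bound_of_continuousOn (s := Set.Icc a b) h0.continuousOn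
  have hB0 : 0 ≤ B := (norm_nonneg _).trans (hB a (Set.left_mem_Icc.2 hab.le))
  set ε := η / (B + 1) with hε
  have hε0 : 0 < ε := by positivity
  have key := hloc a b hab _ (hφ.const_mul ε)
  have hle : ∫ x in a..b, V (ε * φ 0 x) ≤ ∫ x in a..b, ε ^ 2 * (k * φ 0 x ^ 2) := by
    refine intervalIntegral.integral_mono_on hab.le
      (Continuous.intervalIntegrable (by fun_prop) _ _)
      (Continuous.intervalIntegrable (by fun_prop) _ _) fun x hx => ?_
    refine (hVk _ ?_).trans_eq (by ring)
    rw [abs_mul, abs_of_pos hε0, hε, div_mul_eq_mul_div, div_le_iff₀ (by positivity)]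
    have := hB x hx
    rw [Real.norm_eq_abs] at this
    nlinarith
  simp only [mul_pow, intervalIntegral.integral_const_mul] at key hle ⊢
  have h3 := mul_le_mul_of_nonneg_left hle (by positivity : (0 : ℝ) ≤ 1 / (b - a) ^ 2)
  have h4 : ε ^ 2 * (c * ∫ x in a..b, φ 1 x ^ 2) ≤ ε ^ 2 * (1 / (b - a) ^ 2 *
      (k * ∫ x in a..b, φ 0 x ^ 2) + (b - a) ^ 2 * ∫ x in a..b, φ 2 x ^ 2) := by
    linarith
  exact le_of_mul_le_mul_left h4 (by positivity)

namespace HasInterp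

variable {c k q : ℝ}

theorem mul_integral_le (h : HasInterp c k) (hc : 0 < c) (hk : 0 ≤ k) (hq0 : 0 ≤ q)
    (hq : 4 * q ≤ c) {a b : ℝ} (hab : 1 ≤ b - a) {φ : ℕ → ℝ → ℝ} (hφ : DerivChain 2 φ) :
    q * ∫ x in a..b, φ 1 x ^ 2 ≤
      k / 4 * (∫ x in a..b, φ 0 x ^ 2) + 4 * q / c * ∫ x in a..b, φ 2 x ^ 2 := by
  have h0 : 0 ≤ ∫ x in a..b, φ 0 x ^ 2 :=
    intervalIntegral.integral_nonneg (by linarith) fun x _ => by positivity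
  have key := mul_le_mul_of_nonneg_left (h a b hab φ hφ) (div_nonneg hq0 hc.le)
  have hr : q / c ≤ 1 / 4 := by rw [div_le_iff₀ hc]; linarith
  have h1 := mul_le_mul_of_nonneg_right hr (mul_nonneg hk h0)
  have h2 : q / c * (c * ∫ x in a..b, φ 1 x ^ 2) = q * ∫ x in a..b, φ 1 x ^ 2 := by
    field_simp
  have h3 : 4 * q / c = 4 * (q / c) := by ring
  rw [h2] at key
  rw [h3]
  linarith

/-- The energy norm controls all derivatives of a function satisfying a fourth-order
differential inequality. -/
theorem exists_regularity_bound (h : HasInterp c k) (hc : 0 < c) (hk : 0 ≤ k) (q K : ℝ) :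
    ∃ C > 0, ∀ a b : ℝ, 1 ≤ b - a → ∀ φ : ℕ → ℝ → ℝ, DerivChain 4 φ →
      (∀ x ∈ Set.Icc a b, |2 * φ 4 x + 2 * q * φ 2 x| ≤ K * |φ 0 x|) →
      (∀ i ≤ 4, ∫ x in a..b, φ i x ^ 2 ≤
        C * ((∫ x in a..b, φ 0 x ^ 2) + ∫ x in a..b, φ 2 x ^ 2)) ∧
      ∀ i ≤ 3, ∀ x ∈ Set.Icc a b, φ i x ^ 2 ≤
        C * ((∫ x in a..b, φ 0 x ^ 2) + ∫ x in a..b, φ 2 x ^ 2) := by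
  set D := K ^ 2 + 2 * q ^ 2 with hD
  have hD0 : 0 ≤ D := by positivity
  have hA : 0 ≤ (k + 4) / c := by positivity
  have hB : 0 ≤ (k + 4 * D) / c := by positivity
  set C := 1 + (k + 4) / c + D + (k + 4 * D) / c with hC
  have hC1 : 1 ≤ C := by linarith
  refine ⟨3 * C, by linarith, fun a b hab φ hφ hode => ?_⟩
  have hab' : a ≤ b := by linarith
  have hcont : ∀ i ≤ 4, Continuous (φ i) := fun i hi => hφ.continuous hi
  have hc0 := hcont 0 (by norm_num)
  have hc2 := hcont 2 (by norm_num)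
  have hc4 := hcont 4 le_rfl
  have hnn : ∀ i, 0 ≤ ∫ x in a..b, φ i x ^ 2 := fun i =>
    intervalIntegral.integral_nonneg hab' fun x _ => by positivity
  have n0 := hnn 0
  have n2 := hnn 2
  set X := (∫ x in a..b, φ 0 x ^ 2) + ∫ x in a..b, φ 2 x ^ 2 with hX
  have hX0 : 0 ≤ X := by positivity
  have i4 : ∫ x in a..b, φ 4 x ^ 2 ≤ D * X := by
    rw [hX, ← intervalIntegral.integral_add (Continuous.intervalIntegrable (by fun_prop) _ _)
      (Continuous.intervalIntegrable (by fun_prop) _ _), ← intervalIntegral.integral_const_mul]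
    refine intervalIntegral.integral_mono_on hab'
      (Continuous.intervalIntegrable (by fun_prop) _ _)
      (Continuous.intervalIntegrable (by fun_prop) _ _) fun x hx => ?_
    have h1 : (2 * φ 4 x + 2 * q * φ 2 x) ^ 2 ≤ K ^ 2 * φ 0 x ^ 2 := by
      rw [← sq_abs, ← sq_abs (φ 0 x), ← mul_pow]
      exact pow_le_pow_left₀ (abs_nonneg _) (hode x hx) 2
    nlinarith [sq_nonneg (2 * φ 4 x + 4 * q * φ 2 x), mul_nonneg (sq_nonneg q) (sq_nonneg (φ 0 x)),
      mul_nonneg (sq_nonneg K) (sq_nonneg (φ 2 x)), mul_nonneg (sq_nonneg K) (sq_nonneg (φ 0 x))]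
  have i1 : ∫ x in a..b, φ 1 x ^ 2 ≤ (k + 4) / c * X := by
    have := h a b hab φ (hφ.mono (by norm_num))
    rw [div_mul_eq_mul_div, le_div_iff₀ hc]
    nlinarith
  have i3 : ∫ x in a..b, φ 3 x ^ 2 ≤ (k + 4 * D) / c * X := by
    have := h a b hab _ (hφ.shift (i := 2) (m := 2) le_rfl)
    norm_num at this
    rw [div_mul_eq_mul_div, le_div_iff₀ hc]
    nlinarith
  have t1 := mul_nonneg hA hX0
  have t2 := mul_nonneg hB hX0
  have t3 := mul_nonneg hD0 hX0
  have hint : ∀ i ≤ 4, ∫ x in a..b, φ i x ^ 2 ≤ C * X := by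
    intro i hi
    have hCX : C * X = X + (k + 4) / c * X + D * X + (k + 4 * D) / c * X := by rw [hC]; ring
    rw [hCX]
    interval_cases i <;> linarith
  refine ⟨fun i hi => ?_, fun i hi x hx => ?_⟩
  · have := hint i hi
    nlinarith
  · have := sq_le_integral_of_one_le (hφ.hasDerivAt i (by omega)) (hcont (i + 1) (by omega)) hab hx
    have := hint i (by omega)
    have := hint (i + 1) (by omega)
    linarith

end HasInterp

/-- Weak form of the fourth-order operator `2 ∂⁴ + 2 q ∂²`. -/
theorem integral_mul_eq_boundary_add {φ ψ : ℕ → ℝ → ℝ} (hφ : DerivChain 4 φ)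
    (hψ : DerivChain 2 ψ) (q a b : ℝ) :
    ∫ x in a..b, (2 * φ 4 x + 2 * q * φ 2 x) * ψ 0 x =
      (2 * φ 3 b * ψ 0 b - 2 * φ 2 b * ψ 1 b + 2 * q * φ 1 b * ψ 0 b) -
      (2 * φ 3 a * ψ 0 a - 2 * φ 2 a * ψ 1 a + 2 * q * φ 1 a * ψ 0 a) +
      (2 * (∫ x in a..b, φ 2 x * ψ 2 x) - 2 * q * ∫ x in a..b, φ 1 x * ψ 1 x) := by
  have c1 := hφ.continuous (i := 1) (by norm_num)
  have c2 := hφ.continuous (i := 2) (by norm_num)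
  have c3 := hφ.continuous (i := 3) (by norm_num)
  have c4 := hφ.continuous (i := 4) (by norm_num)
  have d0 := hψ.continuous (i := 0) (by norm_num)
  have d1 := hψ.continuous (i := 1) (by norm_num)
  have d2 := hψ.continuous (i := 2) le_rfl
  have hftc := intervalIntegral.integral_eq_sub_of_hasDerivAt (a := a) (b := b)
    (f := fun x => 2 * φ 3 x * ψ 0 x - 2 * φ 2 x * ψ 1 x + 2 * q * φ 1 x * ψ 0 x)
    (f' := fun x => (2 * φ 4 x + 2 * q * φ 2 x) * ψ 0 x -
      (2 * (φ 2 x * ψ 2 x) - 2 * q * (φ 1 x * ψ 1 x))) (fun x _ => ?_)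
    (Continuous.intervalIntegrable (by fun_prop) _ _)
  · rw [← hftc, intervalIntegral.integral_sub (Continuous.intervalIntegrable (by fun_prop) _ _)
      (Continuous.intervalIntegrable (by fun_prop) _ _),
      intervalIntegral.integral_sub (Continuous.intervalIntegrable (by fun_prop) _ _)
      (Continuous.intervalIntegrable (by fun_prop) _ _), intervalIntegral.integral_const_mul,
      intervalIntegral.integral_const_mul]
    ring
  · have e1 := hφ.hasDerivAt 1 (by norm_num) x
    have e2 := hφ.hasDerivAt 2 (by norm_num) x
    have e3 := hφ.hasDerivAt 3 (by norm_num) x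
    have g0 := hψ.hasDerivAt 0 (by norm_num) x
    have g1 := hψ.hasDerivAt 1 (by norm_num) x
    convert! (((e3.const_mul 2).mul g0).sub ((e2.const_mul 2).mul g1)).add
      ((e1.const_mul (2 * q)).mul g0) using 1
    norm_num
    ring

/-- Solutions of a fourth-order differential inequality with a restoring force are controlled,
uniformly in the length of the interval, by their boundary data. -/
theorem HasInterp.exists_boundary_bound {c k q : ℝ} (h : HasInterp c k) (hc : 0 < c) (hk : 0 < k)
    (hq0 : 0 ≤ q) (hq : 4 * q < c) (K : ℝ) :
    ∃ C > 0, ∀ a b δ : ℝ, 1 ≤ b - a → ∀ φ : ℕ → ℝ → ℝ, DerivChain 4 φ →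
      (∀ x ∈ Set.Icc a b, |2 * φ 4 x + 2 * q * φ 2 x| ≤ K * |φ 0 x|) →
      (∀ x ∈ Set.Icc a b, (2 * φ 4 x + 2 * q * φ 2 x) * φ 0 x ≤ -(3 * k / 4) * φ 0 x ^ 2) →
      |φ 0 a| ≤ δ → |φ 1 a| ≤ δ → |φ 0 b| ≤ δ → |φ 1 b| ≤ δ →
      (∀ i ≤ 4, ∫ x in a..b, φ i x ^ 2 ≤ C * δ ^ 2) ∧
      ∀ i ≤ 3, ∀ x ∈ Set.Icc a b, φ i x ^ 2 ≤ C * δ ^ 2 := by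
  obtain ⟨D, hD0, hD⟩ := h.exists_regularity_bound hc hk.le q K
  set r := 4 * q / c with hr
  have hr1 : r < 1 := by rw [hr, div_lt_one hc]; exact hq
  set m := min (2 * (1 - r)) (k / 4) with hm
  have hm0 : 0 < m := lt_min (by linarith) (by linarith)
  set θ := m / (8 * D) with hθ
  have hθ0 : 0 < θ := by positivity
  have hθD : 4 * θ * D = m / 2 := by rw [hθ]; field_simp; norm_num
  refine ⟨D * (2 / m * (4 / θ + 4 * q)), by positivity,
    fun a b δ hab φ hφ hode hforce h0a h1a h0b h1b => ?_⟩
  obtain ⟨hint, hsup⟩ := hD a b hab φ hφ hode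
  have hab' : a ≤ b := by linarith
  have c0 := hφ.continuous (i := 0) (by norm_num)
  have c2 := hφ.continuous (i := 2) (by norm_num)
  have c4 := hφ.continuous (i := 4) (by norm_num)
  have n0 : 0 ≤ ∫ x in a..b, φ 0 x ^ 2 :=
    intervalIntegral.integral_nonneg hab' fun x _ => by positivity
  have n2 : 0 ≤ ∫ x in a..b, φ 2 x ^ 2 :=
    intervalIntegral.integral_nonneg hab' fun x _ => by positivity
  set X := (∫ x in a..b, φ 0 x ^ 2) + ∫ x in a..b, φ 2 x ^ 2 with hX
  have hle : ∫ x in a..b, (2 * φ 4 x + 2 * q * φ 2 x) * φ 0 x ≤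
      -(3 * k / 4) * ∫ x in a..b, φ 0 x ^ 2 := by
    rw [← intervalIntegral.integral_const_mul]
    exact intervalIntegral.integral_mono_on hab'
      (Continuous.intervalIntegrable (by fun_prop) _ _)
      (Continuous.intervalIntegrable (by fun_prop) _ _) hforce
  have hφ2 := hφ.mono (m := 2) (by norm_num)
  rw [integral_mul_eq_boundary_add hφ hφ2] at hle
  simp only [← pow_two] at hle
  have hq1 := h.mul_integral_le hc hk.le hq0 hq.le hab hφ2
  rw [← hr] at hq1
  have hbdry : ∀ x ∈ Set.Icc a b, |φ 0 x| ≤ δ → |φ 1 x| ≤ δ →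
      |2 * φ 3 x * φ 0 x - 2 * φ 2 x * φ 1 x + 2 * q * φ 1 x * φ 0 x| ≤
        2 * θ * D * X + (2 / θ + 2 * q) * δ ^ 2 := by
    intro x hx h0 h1
    have s2 := hsup 2 (by norm_num) x hx
    have s3 := hsup 3 (by norm_num) x hx
    have h0' : φ 0 x ^ 2 ≤ δ ^ 2 := by
      rw [← sq_abs]; exact pow_le_pow_left₀ (abs_nonneg _) h0 2
    have h1' : φ 1 x ^ 2 ≤ δ ^ 2 := by
      rw [← sq_abs]; exact pow_le_pow_left₀ (abs_nonneg _) h1 2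
    have young : ∀ y z : ℝ, y ^ 2 ≤ D * X → z ^ 2 ≤ δ ^ 2 →
        |2 * y * z| ≤ θ * (D * X) + 1 / θ * δ ^ 2 := by
      intro y z hy hz
      have e1 : θ * y ^ 2 ≤ θ * (D * X) := mul_le_mul_of_nonneg_left hy hθ0.le
      have e2 : 1 / θ * z ^ 2 ≤ 1 / θ * δ ^ 2 :=
        mul_le_mul_of_nonneg_left hz (by positivity)
      have e3 : 0 ≤ 1 / θ * (θ * y - z) ^ 2 := by positivity
      have e4 : 0 ≤ 1 / θ * (θ * y + z) ^ 2 := by positivity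
      have e5 : 1 / θ * (θ * y - z) ^ 2 = θ * y ^ 2 - 2 * y * z + 1 / θ * z ^ 2 := by
        field_simp; ring
      have e6 : 1 / θ * (θ * y + z) ^ 2 = θ * y ^ 2 + 2 * y * z + 1 / θ * z ^ 2 := by
        field_simp; ring
      rw [abs_le]
      constructor <;> linarith
    have y3 := abs_le.1 (young _ _ s3 h0')
    have y2 := abs_le.1 (young _ _ s2 h1')
    have y1 : |2 * q * φ 1 x * φ 0 x| ≤ 2 * q * δ ^ 2 := by
      rw [mul_assoc, abs_mul, abs_of_nonneg (by positivity : 0 ≤ 2 * q)]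
      refine mul_le_mul_of_nonneg_left ?_ (by positivity)
      rw [abs_le]
      constructor <;> nlinarith [sq_nonneg (φ 1 x + φ 0 x), sq_nonneg (φ 1 x - φ 0 x)]
    have y1 := abs_le.1 y1
    have e : 2 / θ = 2 * (1 / θ) := by ring
    rw [abs_le, e]
    constructor <;> linarith [y1.1, y1.2, y2.1, y2.2, y3.1, y3.2]
  have Ba := abs_le.1 (hbdry a (Set.left_mem_Icc.2 hab') h0a h1a)
  have Bb := abs_le.1 (hbdry b (Set.right_mem_Icc.2 hab') h0b h1b)
  have hmX : m * X ≤ 2 * (1 - r) * (∫ x in a..b, φ 2 x ^ 2) +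
      k / 4 * ∫ x in a..b, φ 0 x ^ 2 := by
    have := mul_le_mul_of_nonneg_right (min_le_left (2 * (1 - r)) (k / 4)) n2
    have := mul_le_mul_of_nonneg_right (min_le_right (2 * (1 - r)) (k / 4)) n0
    rw [hX]
    linarith
  have hXle : m / 2 * X ≤ (4 / θ + 4 * q) * δ ^ 2 := by
    have e : 2 * θ * D * X = m / 4 * X := by
      rw [show 2 * θ * D = m / 4 by linarith]
    have e' : 4 / θ = 2 * (2 / θ) := by ring
    rw [e] at Ba Bb
    rw [e']
    linarith [Ba.1, Ba.2, Bb.1, Bb.2]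
  have hXfin : D * X ≤ D * (2 / m * (4 / θ + 4 * q)) * δ ^ 2 := by
    rw [mul_assoc]
    refine mul_le_mul_of_nonneg_left ?_ hD0.le
    calc X = 2 / m * (m / 2 * X) := by field_simp
      _ ≤ 2 / m * ((4 / θ + 4 * q) * δ ^ 2) :=
        mul_le_mul_of_nonneg_left hXle (by positivity)
      _ = _ := by ring
  exact ⟨fun i hi => (hint i hi).trans hXfin, fun i hi x hx => (hsup i hi x hx).trans hXfin⟩
section LinearODE

variable {E : Type*} [NormedAddCommGroup E] [NormedSpace ℝ E]

/-- The solution of `y' = A y + F` with `y a = y₀`. -/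
noncomputable def duhamel (A : E →L[ℝ] E) (F : ℝ → E) (a : ℝ) (y₀ : E) (x : ℝ) : E :=
  NormedSpace.exp ((x - a) • A) (y₀ + ∫ s in a..x, NormedSpace.exp ((a - s) • A) (F s))

theorem duhamel_self (A : E →L[ℝ] E) (F : ℝ → E) (a : ℝ) (y₀ : E) :
    duhamel A F a y₀ a = y₀ := by
  simp [duhamel]

theorem duhamel_zero (A : E →L[ℝ] E) (a : ℝ) (y₀ : E) (x : ℝ) :
    duhamel A 0 a y₀ x = NormedSpace.exp ((x - a) • A) y₀ := by
  simp [duhamel]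

theorem hasDerivAt_duhamel [CompleteSpace E] (A : E →L[ℝ] E) {F : ℝ → E} (hF : Continuous F)
    (a : ℝ) (y₀ : E) (x : ℝ) :
    HasDerivAt (duhamel A F a y₀) (A (duhamel A F a y₀ x) + F x) x := by
  have hexp : ∀ t : ℝ, HasDerivAt (fun u : ℝ => NormedSpace.exp (u • A))
      (A * NormedSpace.exp (t • A)) t := fun t => hasDerivAt_exp_smul_const' A t
  have hcexp : Continuous fun u : ℝ => NormedSpace.exp (u • A) :=
    continuous_iff_continuousAt.2 fun t => (hexp t).continuousAt
  have h1 : HasDerivAt (fun u : ℝ => NormedSpace.exp ((u - a) • A))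
      (A * NormedSpace.exp ((x - a) • A)) x := by
    simpa using (hexp (x - a)).comp_sub_const x a
  have hc : Continuous fun s => NormedSpace.exp ((a - s) • A) (F s) :=
    (hcexp.comp (by fun_prop : Continuous fun s : ℝ => a - s)).clm_apply hF
  have h2 := ((hc.integral_hasStrictDerivAt a x).hasDerivAt).const_add y₀
  have h3 := h1.clm_apply h2
  have hinv : NormedSpace.exp ((x - a) • A) * NormedSpace.exp ((a - x) • A) = 1 := by
    let _ : NormedAlgebra ℚ (E →L[ℝ] E) := NormedAlgebra.restrictScalars ℚ ℝ _
    rw [← NormedSpace.exp_add_of_commute, ← add_smul]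
    · simp
    · exact ((Commute.refl A).smul_left _).smul_right _
  convert! h3 using 1
  congr 1
  have := congrArg (fun T : E →L[ℝ] E => T (F x)) hinv
  simpa using this.symm

end LinearODE

/-- The companion operator of `2 ∂⁴ + 2 q ∂² + k`. -/
noncomputable def companion (q k : ℝ) : (Fin 4 → ℝ) →L[ℝ] (Fin 4 → ℝ) :=
  LinearMap.toContinuousLinearMap
    { toFun := fun y => ![y 1, y 2, y 3, -(q * y 2) - k / 2 * y 0]
      map_add' := fun y z => by
        ext i; fin_cases i <;> simp; ring
      map_smul' := fun r y => by
        ext i; fin_cases i <;> simp; ring }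

theorem companion_apply (q k : ℝ) (y : Fin 4 → ℝ) :
    companion q k y = ![y 1, y 2, y 3, -(q * y 2) - k / 2 * y 0] := rfl

/-- A solution of the companion system yields a chain of derivatives solving the fourth-order
equation. -/
theorem exists_chain_of_companion {q k : ℝ} {f : ℝ → ℝ} (hf : Continuous f) {y : ℝ → Fin 4 → ℝ}
    (hy : ∀ x, HasDerivAt y (companion q k (y x) + ![0, 0, 0, f x / 2]) x) :
    ∃ φ, DerivChain 4 φ ∧ (∀ x, 2 * φ 4 x + 2 * q * φ 2 x + k * φ 0 x = f x) ∧
      φ 0 = (y · 0) ∧ φ 1 = (y · 1) ∧ φ 2 = (y · 2) ∧ φ 3 = (y · 3) := by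
  have hyi : ∀ i x, HasDerivAt (y · i) ((companion q k (y x) + ![0, 0, 0, f x / 2]) i) x :=
    fun i x => hasDerivAt_pi.1 (hy x) i
  have hci : ∀ i, Continuous (y · i) := fun i =>
    continuous_iff_continuousAt.2 fun x => (hyi i x).continuousAt
  refine ⟨fun i x => if i = 0 then y x 0 else if i = 1 then y x 1 else if i = 2 then y x 2
    else if i = 3 then y x 3 else -(q * y x 2) - k / 2 * y x 0 + f x / 2,
    ⟨fun i hi x => ?_, ?_⟩, fun x => ?_, rfl, rfl, rfl, rfl⟩
  · have h0 := hyi 0 x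
    have h1 := hyi 1 x
    have h2 := hyi 2 x
    have h3 := hyi 3 x
    simp only [companion_apply] at h0 h1 h2 h3
    interval_cases i
    · simpa using h0
    · simpa using h1
    · simpa using h2
    · simpa using h3
  · have := hci 0
    have := hci 2
    norm_num
    fun_prop
  · norm_num
    ring

/-- Solvability of the linear clamped boundary value problem. -/
theorem HasInterp.exists_linear_solution {c k q : ℝ} (h : HasInterp c k) (hc : 0 < c) (hk : 0 < k)
    (hq0 : 0 ≤ q) (hq : 4 * q < c) {a b : ℝ} (hab : 1 ≤ b - a) {f : ℝ → ℝ} (hf : Continuous f)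
    (α₀ α₁ β₀ β₁ : ℝ) :
    ∃ φ, DerivChain 4 φ ∧ (∀ x, 2 * φ 4 x + 2 * q * φ 2 x + k * φ 0 x = f x) ∧
      φ 0 a = α₀ ∧ φ 1 a = α₁ ∧ φ 0 b = β₀ ∧ φ 1 b = β₁ := by
  obtain ⟨C, -, hC⟩ := h.exists_boundary_bound hc hk hq0 hq k
  let Φ := NormedSpace.exp ((b - a) • companion q k)
  let S : (Fin 4 → ℝ) →ₗ[ℝ] (Fin 4 → ℝ) :=
    { toFun := fun y => ![y 0, y 1, Φ y 0, Φ y 1]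
      map_add' := fun y z => by
        ext i; fin_cases i <;> simp
      map_smul' := fun r y => by
        ext i; fin_cases i <;> simp }
  have hS : Function.Injective S := by
    refine (injective_iff_map_eq_zero S).2 fun y hy => ?_
    have hy0 : y 0 = 0 := by simpa [S] using congrFun hy 0
    have hy1 : y 1 = 0 := by simpa [S] using congrFun hy 1
    have hy2 : Φ y 0 = 0 := by simpa [S] using congrFun hy 2
    have hy3 : Φ y 1 = 0 := by simpa [S] using congrFun hy 3
    obtain ⟨φ, hφ, hode, e0, e1, e2, e3⟩ := exists_chain_of_companion (q := q) (k := k)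
      (f := fun _ => 0) continuous_const (y := duhamel (companion q k) 0 a y) (fun x => by
        convert! hasDerivAt_duhamel (companion q k) (F := 0) continuous_const a y x using 2
        ext i; fin_cases i <;> simp)
    have hb : duhamel (companion q k) 0 a y b = Φ y := duhamel_zero _ _ _ _
    have ha : duhamel (companion q k) 0 a y a = y := duhamel_self _ _ _ _
    have heq : ∀ x, 2 * φ 4 x + 2 * q * φ 2 x = -(k * φ 0 x) := fun x => by linarith [hode x]
    have hz := (hC a b 0 hab φ hφ (fun x _ => by rw [heq, abs_neg, abs_mul, abs_of_pos hk])
      (fun x _ => by rw [heq]; nlinarith [mul_nonneg hk.le (sq_nonneg (φ 0 x))])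
      (by simp [e0, ha, hy0]) (by simp [e1, ha, hy1]) (by simp [e0, hb, hy2])
      (by simp [e1, hb, hy3])).2
    have hz' : ∀ i ≤ 3, φ i a = 0 := fun i hi => by
      have := hz i hi a (Set.left_mem_Icc.2 (by linarith))
      exact pow_eq_zero_iff two_ne_zero |>.1 (le_antisymm (by simpa using this) (sq_nonneg _))
    ext i
    fin_cases i
    · exact hy0
    · exact hy1
    · simpa [e2, ha] using hz' 2 (by norm_num)
    · simpa [e3, ha] using hz' 3 (by norm_num)
  let F : ℝ → Fin 4 → ℝ := fun x => ![0, 0, 0, f x / 2]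
  have hF : Continuous F := by
    refine continuous_pi fun i => ?_
    fin_cases i <;> simp [F] <;> fun_prop
  let p := duhamel (companion q k) F a 0 b
  obtain ⟨y, hy⟩ := LinearMap.injective_iff_surjective.1 hS ![α₀, α₁, β₀ - p 0, β₁ - p 1]
  have hy0 : y 0 = α₀ := by simpa [S] using congrFun hy 0
  have hy1 : y 1 = α₁ := by simpa [S] using congrFun hy 1
  have hy2 : Φ y 0 = β₀ - p 0 := by simpa [S] using congrFun hy 2
  have hy3 : Φ y 1 = β₁ - p 1 := by simpa [S] using congrFun hy 3
  obtain ⟨φ, hφ, hode, e0, e1, -, -⟩ := exists_chain_of_companion hf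
    (hasDerivAt_duhamel (companion q k) hF a y)
  have ha : duhamel (companion q k) F a y a = y := duhamel_self _ _ _ _
  have hb : duhamel (companion q k) F a y b = Φ y + p := by
    simp only [duhamel, p, Φ, map_add, zero_add]
  refine ⟨φ, hφ, hode, ?_, ?_, ?_, ?_⟩
  · simp [e0, ha, hy0]
  · simp [e1, ha, hy1]
  · simp [e0, hb, hy2]
  · simp [e1, hb, hy3]
/-- A map that contracts an energy controlled by, and eventually controlling, the distance has a
fixed point. -/
theorem exists_fixedPoint_of_energy {X : Type*} [MetricSpace X] [CompleteSpace X] [Nonempty X]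
    {T : X → X} {d : X → X → ℝ} {M L : ℝ} (hM : 0 ≤ M)
    (hd : ∀ x y, d (T x) (T y) ≤ 1 / 4 * d x y)
    (hdist : ∀ x y, dist (T x) (T y) ^ 2 ≤ M * d x y)
    (hL : ∀ x y, d x y ≤ L * dist x y ^ 2) : ∃ x, T x = x := by
  have hiter : ∀ (n : ℕ) x y, d (T^[n] x) (T^[n] y) ≤ (1 / 4) ^ n * d x y := by
    intro n
    induction n with
    | zero => simp
    | succ n ih =>
      intro x y
      rw [Function.iterate_succ_apply', Function.iterate_succ_apply']
      calc _ ≤ 1 / 4 * d (T^[n] x) (T^[n] y) := hd _ _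
        _ ≤ 1 / 4 * ((1 / 4) ^ n * d x y) := by linarith [ih x y]
        _ = _ := by ring
  have hlim : Filter.Tendsto (fun n : ℕ => M * L * (1 / 4 : ℝ) ^ n) Filter.atTop (nhds 0) := by
    simpa using (tendsto_pow_atTop_nhds_zero_of_lt_one (by norm_num : (0 : ℝ) ≤ 1 / 4)
      (by norm_num)).const_mul (M * L)
  obtain ⟨n, hn⟩ := (hlim.eventually_lt_const (by norm_num : (0 : ℝ) < 1 / 4)).exists
  have hcontr : ContractingWith (1 / 2) T^[n + 1] := by
    refine ⟨by rw [← NNReal.coe_lt_coe]; norm_num, LipschitzWith.of_dist_le_mul fun x y => ?_⟩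
    refine abs_le_of_sq_le_sq' ?_ (by positivity) |>.2
    rw [Function.iterate_succ_apply', Function.iterate_succ_apply']
    calc dist (T (T^[n] x)) (T (T^[n] y)) ^ 2 ≤ M * d (T^[n] x) (T^[n] y) := hdist _ _
      _ ≤ M * ((1 / 4) ^ n * (L * dist x y ^ 2)) := by
        refine mul_le_mul_of_nonneg_left ((hiter n x y).trans ?_) hM
        exact mul_le_mul_of_nonneg_left (hL x y) (by positivity)
      _ = M * L * (1 / 4) ^ n * dist x y ^ 2 := by ring
      _ ≤ 1 / 4 * dist x y ^ 2 := mul_le_mul_of_nonneg_right hn.le (sq_nonneg _)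
      _ = _ := by push_cast; ring
  exact ⟨_, hcontr.isFixedPt_fixedPoint_iterate⟩

namespace HasInterp

variable {c k q : ℝ}

/-- Energy estimate for the linear problem with homogeneous boundary data. -/
theorem exists_linear_bound (h : HasInterp c k) (hc : 0 < c) (hk : 0 < k) (hq0 : 0 ≤ q)
    (hq : 4 * q < c) :
    ∃ M > 0, ∀ a b : ℝ, 1 ≤ b - a → ∀ φ, DerivChain 4 φ →
      φ 0 a = 0 → φ 1 a = 0 → φ 0 b = 0 → φ 1 b = 0 →
      k ^ 2 * ∫ x in a..b, φ 0 x ^ 2 ≤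
        4 * ∫ x in a..b, (2 * φ 4 x + 2 * q * φ 2 x + k * φ 0 x) ^ 2 ∧
      ∀ x ∈ Set.Icc a b, φ 0 x ^ 2 ≤
        M * ∫ x in a..b, (2 * φ 4 x + 2 * q * φ 2 x + k * φ 0 x) ^ 2 := by
  set r := 4 * q / c with hr
  have hr1 : 0 < 1 - r := by rw [sub_pos, hr, div_lt_one hc]; exact hq
  refine ⟨4 / k ^ 2 + (4 / k + 2 / (k * (1 - r))) / c, by positivity,
    fun a b hab φ hφ h0a h1a h0b h1b => ?_⟩
  have hab' : a ≤ b := by linarith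
  have c0 := hφ.continuous (i := 0) (by norm_num)
  have c1 := hφ.continuous (i := 1) (by norm_num)
  have c2 := hφ.continuous (i := 2) (by norm_num)
  have c4 := hφ.continuous (i := 4) (by norm_num)
  have hφ2 := hφ.mono (m := 2) (by norm_num)
  have hq1 := h.mul_integral_le hc hk.le hq0 hq.le hab hφ2
  rw [← hr] at hq1
  have hweak := integral_mul_eq_boundary_add hφ hφ2 q a b
  simp only [h0a, h1a, h0b, h1b, ← pow_two, mul_zero, sub_zero, zero_add] at hweak
  set A := ∫ x in a..b, φ 0 x ^ 2 with hA
  set A₂ := ∫ x in a..b, φ 2 x ^ 2 with hA₂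
  set F := ∫ x in a..b, (2 * φ 4 x + 2 * q * φ 2 x + k * φ 0 x) ^ 2 with hF
  have nA : 0 ≤ A := intervalIntegral.integral_nonneg hab' fun x _ => by positivity
  have nA₂ : 0 ≤ A₂ := intervalIntegral.integral_nonneg hab' fun x _ => by positivity
  have nF : 0 ≤ F := intervalIntegral.integral_nonneg hab' fun x _ => by positivity
  have hyoung : (∫ x in a..b, (2 * φ 4 x + 2 * q * φ 2 x) * φ 0 x) + k * A ≤
      k / 4 * A + 1 / k * F := by
    rw [hA, hF, ← intervalIntegral.integral_const_mul, ← intervalIntegral.integral_const_mul,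
      ← intervalIntegral.integral_const_mul,
      ← intervalIntegral.integral_add (Continuous.intervalIntegrable (by fun_prop) _ _)
        (Continuous.intervalIntegrable (by fun_prop) _ _),
      ← intervalIntegral.integral_add (Continuous.intervalIntegrable (by fun_prop) _ _)
        (Continuous.intervalIntegrable (by fun_prop) _ _)]
    refine intervalIntegral.integral_mono_on hab'
      (Continuous.intervalIntegrable (by fun_prop) _ _)
      (Continuous.intervalIntegrable (by fun_prop) _ _) fun x _ => ?_
    set y := 2 * φ 4 x + 2 * q * φ 2 x + k * φ 0 x with hy
    have e1 : 0 ≤ 1 / k * (y - k / 2 * φ 0 x) ^ 2 := by positivity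
    have e2 : 1 / k * (y - k / 2 * φ 0 x) ^ 2 =
        1 / k * y ^ 2 - y * φ 0 x + k / 4 * φ 0 x ^ 2 := by field_simp; ring
    have e3 : y * φ 0 x = (2 * φ 4 x + 2 * q * φ 2 x) * φ 0 x + k * φ 0 x ^ 2 := by
      rw [hy]; ring
    linarith
  have hmain : 2 * (1 - r) * A₂ + k / 4 * A ≤ 1 / k * F := by linarith
  have hAle : A ≤ 4 / k ^ 2 * F := by
    have := mul_le_mul_of_nonneg_left (show k / 4 * A ≤ 1 / k * F by nlinarith)
      (show 0 ≤ 4 / k by positivity)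
    calc A = 4 / k * (k / 4 * A) := by field_simp
      _ ≤ 4 / k * (1 / k * F) := this
      _ = _ := by field_simp
  have hA₂le : A₂ ≤ 1 / (2 * k * (1 - r)) * F := by
    have := mul_le_mul_of_nonneg_left (show 2 * (1 - r) * A₂ ≤ 1 / k * F by nlinarith)
      (show 0 ≤ 1 / (2 * (1 - r)) by positivity)
    calc A₂ = 1 / (2 * (1 - r)) * (2 * (1 - r) * A₂) := by field_simp
      _ ≤ 1 / (2 * (1 - r)) * (1 / k * F) := this
      _ = _ := by field_simp
  refine ⟨?_, fun x hx => ?_⟩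
  · calc k ^ 2 * A ≤ k ^ 2 * (4 / k ^ 2 * F) := mul_le_mul_of_nonneg_left hAle (by positivity)
      _ = 4 * F := by field_simp
  · have hsup := sq_le_sq_add_integral (hφ.hasDerivAt 0 (by norm_num)) c1 hx
      (Set.left_mem_Icc.2 hab')
    have hA₁ : ∫ x in a..b, φ 1 x ^ 2 ≤ (4 / k + 2 / (k * (1 - r))) / c * F := by
      rw [div_mul_eq_mul_div, le_div_iff₀ hc]
      calc _ = c * ∫ x in a..b, φ 1 x ^ 2 := mul_comm _ _
        _ ≤ k * A + 4 * A₂ := h a b hab φ hφ2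
        _ ≤ k * (4 / k ^ 2 * F) + 4 * (1 / (2 * k * (1 - r)) * F) := by gcongr
        _ = _ := by field_simp; ring
    rw [h0a] at hsup
    simp only [zero_add] at hsup
    rw [add_mul]
    linarith

/-- Solvability of the clamped boundary value problem with a small Lipschitz nonlinearity. -/
theorem exists_semilinear_solution (h : HasInterp c k) (hc : 0 < c) (hk : 0 < k) (hq0 : 0 ≤ q)
    (hq : 4 * q < c) {a b : ℝ} (hab : 1 ≤ b - a) {N : ℝ → ℝ} (hNc : Continuous N)
    (hN : ∀ s t, |N s - N t| ≤ k / 4 * |s - t|) (α₀ α₁ β₀ β₁ : ℝ) :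
    ∃ φ, DerivChain 4 φ ∧
      (∀ x ∈ Set.Icc a b, 2 * φ 4 x + 2 * q * φ 2 x + k * φ 0 x = -N (φ 0 x)) ∧
      φ 0 a = α₀ ∧ φ 1 a = α₁ ∧ φ 0 b = β₀ ∧ φ 1 b = β₁ := by
  have hab' : a ≤ b := by linarith
  obtain ⟨M, hM, hbound⟩ := h.exists_linear_bound hc hk hq0 hq
  let e : C(Set.Icc a b, ℝ) → ℝ → ℝ := fun ψ => Set.IccExtend hab' ψ
  have he : ∀ ψ, Continuous (e ψ) := fun ψ => ψ.continuous.Icc_extend'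
  have hemem : ∀ ψ x (hx : x ∈ Set.Icc a b), e ψ x = ψ ⟨x, hx⟩ := fun ψ x hx =>
    Set.IccExtend_of_mem _ _ hx
  choose Φ hΦ hode h0a h1a h0b h1b using fun ψ : C(Set.Icc a b, ℝ) =>
    h.exists_linear_solution hc hk hq0 hq hab (f := fun x => -N (e ψ x))
      (hNc.comp (he ψ)).neg α₀ α₁ β₀ β₁
  let T : C(Set.Icc a b, ℝ) → C(Set.Icc a b, ℝ) := fun ψ =>
    ⟨fun x => Φ ψ 0 x, ((hΦ ψ).continuous (by norm_num)).comp continuous_subtype_val⟩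
  let d : C(Set.Icc a b, ℝ) → C(Set.Icc a b, ℝ) → ℝ := fun ψ χ =>
    ∫ x in a..b, (e ψ x - e χ x) ^ 2
  have hsrc : ∀ ψ χ, ∫ x in a..b, (2 * (Φ ψ - Φ χ) 4 x + 2 * q * (Φ ψ - Φ χ) 2 x +
      k * (Φ ψ - Φ χ) 0 x) ^ 2 ≤ k ^ 2 / 16 * d ψ χ := by
    intro ψ χ
    have := he ψ
    have := he χ
    have heq : ∀ x, 2 * (Φ ψ - Φ χ) 4 x + 2 * q * (Φ ψ - Φ χ) 2 x + k * (Φ ψ - Φ χ) 0 x =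
        N (e χ x) - N (e ψ x) := by
      intro x
      have := hode ψ x
      have := hode χ x
      simp only [Pi.sub_apply]
      linarith
    simp only [heq, d]
    rw [← intervalIntegral.integral_const_mul]
    refine intervalIntegral.integral_mono_on hab'
      (Continuous.intervalIntegrable (by fun_prop) _ _)
      (Continuous.intervalIntegrable (by fun_prop) _ _) fun x _ => ?_
    rw [← sq_abs, ← sq_abs (e ψ x - e χ x), abs_sub_comm (e ψ x)]
    calc _ ≤ (k / 4 * |e χ x - e ψ x|) ^ 2 := pow_le_pow_left₀ (abs_nonneg _) (hN _ _) 2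
      _ = _ := by ring
  have hlin := fun ψ χ => hbound a b hab (Φ ψ - Φ χ) ((hΦ ψ).sub (hΦ χ))
    (by simp [h0a]) (by simp [h1a]) (by simp [h0b]) (by simp [h1b])
  have : Nonempty C(Set.Icc a b, ℝ) := ⟨0⟩
  suffices hfix : ∃ ψ, T ψ = ψ by
    obtain ⟨ψ, hψ⟩ := hfix
    refine ⟨Φ ψ, hΦ ψ, fun x hx => ?_, h0a ψ, h1a ψ, h0b ψ, h1b ψ⟩
    rw [hode, hemem ψ x hx]
    congr 2
    exact (congrArg (fun χ : C(Set.Icc a b, ℝ) => χ ⟨x, hx⟩) hψ).symm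
  refine exists_fixedPoint_of_energy (d := d) (M := M * (k ^ 2 / 16)) (L := b - a)
    (by positivity) (fun ψ χ => ?_) (fun ψ χ => ?_) (fun ψ χ => ?_)
  · have hT : d (T ψ) (T χ) = ∫ x in a..b, (Φ ψ - Φ χ) 0 x ^ 2 := by
      refine intervalIntegral.integral_congr fun x hx => ?_
      rw [Set.uIcc_of_le hab'] at hx
      simp only [hemem _ x hx]
      rfl
    have h1 := (hlin ψ χ).1
    have h2 := hsrc ψ χ
    rw [hT]
    refine le_of_mul_le_mul_left (a := k ^ 2) ?_ (by positivity)
    linarith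
  · have hmax : dist (T ψ) (T χ) ≤ √(M * (k ^ 2 / 16) * d ψ χ) := by
      refine (ContinuousMap.dist_le (Real.sqrt_nonneg _)).2 fun x => ?_
      refine Real.le_sqrt_of_sq_le ?_
      rw [Real.dist_eq, sq_abs, mul_assoc]
      exact ((hlin ψ χ).2 x x.2).trans (mul_le_mul_of_nonneg_left (hsrc ψ χ) hM.le)
    have hd0 : 0 ≤ d ψ χ := intervalIntegral.integral_nonneg hab' fun x _ => sq_nonneg _
    calc _ ≤ √(M * (k ^ 2 / 16) * d ψ χ) ^ 2 := pow_le_pow_left₀ dist_nonneg hmax 2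
      _ = _ := Real.sq_sqrt (by positivity)
  · have := he ψ
    have := he χ
    have hle : d ψ χ ≤ ∫ _x in a..b, dist ψ χ ^ 2 := by
      refine intervalIntegral.integral_mono_on hab'
        (Continuous.intervalIntegrable (by fun_prop) _ _) (by simp) fun x hx => ?_
      rw [hemem _ x hx, hemem _ x hx, ← sq_abs, ← Real.dist_eq]
      exact pow_le_pow_left₀ dist_nonneg (ContinuousMap.dist_apply_le_dist _) 2
    simpa using hle

end HasInterp
/-- Second-order behaviour of a double-well potential at the well `-1`. -/
theorem DoubleWell.exists_expansion {W : ℝ → ℝ} (hW : DoubleWell W) :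
    ∃ V₂ : ℝ → ℝ, (∀ s, HasDerivAt (fun s => W (-1 + s)) (deriv W (-1 + s)) s) ∧
      (∀ s, HasDerivAt (fun s => deriv W (-1 + s)) (V₂ s) s) ∧
      W (-1) = 0 ∧ deriv W (-1) = 0 ∧
      (∃ m > 0, ∀ s ≤ 1, m * s ^ 2 ≤ W (-1 + s)) ∧
      ∃ k > 0, ∃ η > 0, η ≤ 1 ∧ ∀ s, |s| ≤ η → |V₂ s - k| ≤ k / 4 := by
  obtain ⟨hsmooth, heven, hnonneg, -, hW1, -, m, hm, -, hquad⟩ := hW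
  have hd : ∀ s, HasDerivAt W (deriv W s) s := fun s =>
    (hsmooth.differentiable (by norm_num) s).hasDerivAt
  have hsmooth' : ContDiff ℝ 4 (deriv W) := by
    refine ((contDiff_succ_iff_deriv (n := 4)).1 ?_).2.2
    exact_mod_cast hsmooth
  have hd' : ∀ s, HasDerivAt (deriv W) (deriv (deriv W) s) s := fun s =>
    (hsmooth'.differentiable (by norm_num) s).hasDerivAt
  have hcont : Continuous (deriv (deriv W)) := hsmooth'.continuous_deriv (by norm_num)
  have hV : ∀ s, HasDerivAt (fun s => W (-1 + s)) (deriv W (-1 + s)) s := fun s =>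
    (hd (-1 + s)).comp_const_add (-1) s
  have hV₁ : ∀ s, HasDerivAt (fun s => deriv W (-1 + s)) (deriv (deriv W) (-1 + s)) s :=
    fun s => (hd' (-1 + s)).comp_const_add (-1) s
  have hWm : W (-1) = 0 := by rw [heven]; simpa using hW1
  have hW'm : deriv W (-1) = 0 := by
    refine IsLocalMin.deriv_eq_zero (Filter.Eventually.of_forall fun s => ?_)
    rw [hWm]
    exact hnonneg s
  have hm' : ∀ s ≤ 1, m * s ^ 2 ≤ W (-1 + s) := by
    intro s hs
    have := hquad (1 - s) (by linarith)
    rw [sq_abs] at this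
    rw [heven, show -(-1 + s) = 1 - s by ring]
    linarith [show (1 - s - 1) ^ 2 = s ^ 2 by ring]
  have hcV₂ : Continuous fun s => deriv (deriv W) (-1 + s) := by fun_prop
  have hnear : ∀ ε > 0, ∃ η > 0, η ≤ 1 ∧ ∀ s, |s| ≤ η →
      |deriv (deriv W) (-1 + s) - deriv (deriv W) (-1)| ≤ ε := by
    intro ε hε
    obtain ⟨η, hη, h⟩ := Metric.continuous_iff.1 hcV₂ 0 ε hε
    refine ⟨min (η / 2) 1, by positivity, min_le_right _ _, fun s hs => ?_⟩
    have := h s (by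
      rw [Real.dist_eq, sub_zero]
      linarith [hs.trans (min_le_left (η / 2) 1)])
    simpa [Real.dist_eq] using this.le
  have hkpos : 0 < deriv (deriv W) (-1) := by
    obtain ⟨η, hη, hη1, h⟩ := hnear m hm
    have := le_taylor_remainder (V := fun s => -W (-1 + s)) (V₁ := fun s => -deriv W (-1 + s))
      (V₂ := fun s => -deriv (deriv W) (-1 + s)) (fun s => (hV s).neg) (fun s => (hV₁ s).neg)
      (a := 0) (b := η) (m := -(deriv (deriv W) (-1) + m)) (fun x hx => by
        have := (abs_le.1 (h x (by rw [abs_of_nonneg hx.1]; exact hx.2))).2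
        linarith) (Set.left_mem_Icc.2 hη.le) (Set.right_mem_Icc.2 hη.le)
    simp only [add_zero, hWm, hW'm] at this
    have h2 := hm' η hη1
    have h3 : 0 < η ^ 2 := by positivity
    by_contra! hk
    nlinarith [mul_nonneg_of_nonpos_of_nonpos hk (neg_nonpos.2 h3.le)]
  obtain ⟨η, hη, hη1, h⟩ := hnear _ (by positivity : 0 < deriv (deriv W) (-1) / 4)
  exact ⟨_, hV, hV₁, hWm, hW'm, ⟨m, hm, hm'⟩, _, hkpos, η, hη, hη1, h⟩

/-- A function with small energy starting near the bottom of a well stays near it. -/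
theorem abs_le_of_energy_lt {V f f' : ℝ → ℝ} (hV : Continuous V) (hV0 : ∀ s, 0 ≤ V s) {m η : ℝ}
    (hm : 0 < m) (hη : 0 < η) (hη1 : η ≤ 1) (hmV : ∀ s ≤ 1, m * s ^ 2 ≤ V s)
    (hf : ∀ x, HasDerivAt f (f' x) x) (hf' : Continuous f') {a b : ℝ}
    (hsmall : f a ^ 2 + (1 / m * (∫ x in a..b, V (f x)) + ∫ x in a..b, f' x ^ 2) < η ^ 2) :
    ∀ x ∈ Set.Icc a b, |f x| ≤ η := by
  have hc : Continuous f := continuous_iff_continuousAt.2 fun x => (hf x).continuousAt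
  by_contra! hex
  obtain ⟨y, hy, hyη⟩ := hex
  have hcpt : IsCompact (Set.Icc a b ∩ {x | η ≤ |f x|}) :=
    isCompact_Icc.inter_right (isClosed_le continuous_const hc.abs)
  obtain ⟨z, ⟨hz, hzη⟩, hleast⟩ := hcpt.exists_isLeast ⟨y, hy, hyη.le⟩
  have hsq := sq_le_sq_add_integral hf hf' (Set.right_mem_Icc.2 hz.1) (Set.left_mem_Icc.2 hz.1)
  have h1 : ∫ x in a..z, f x ^ 2 ≤ ∫ x in a..z, 1 / m * V (f x) := by
    refine intervalIntegral.integral_mono_on_of_le_Ioo hz.1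
      (Continuous.intervalIntegrable (by fun_prop) _ _)
      (Continuous.intervalIntegrable (by fun_prop) _ _) fun x hx => ?_
    have hlt : |f x| < η := by
      by_contra! hle
      exact (hleast ⟨⟨hx.1.le, hx.2.le.trans hz.2⟩, hle⟩).not_gt hx.2
    have := hmV (f x) (by linarith [le_abs_self (f x)])
    rw [one_div_mul_eq_div, le_div_iff₀ hm]
    linarith
  have hmono : ∀ g : ℝ → ℝ, Continuous g → (∀ x, 0 ≤ g x) →
      ∫ x in a..z, g x ≤ ∫ x in a..b, g x := fun g hg hg0 =>
    intervalIntegral.integral_mono_interval le_rfl hz.1 hz.2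
      (Filter.Eventually.of_forall hg0) (hg.intervalIntegrable _ _)
  have h2 := hmono (fun x => 1 / m * V (f x)) (by fun_prop)
    fun x => mul_nonneg (by positivity) (hV0 _)
  have h3 := hmono (fun x => f' x ^ 2) (by fun_prop) fun x => sq_nonneg _
  simp only [intervalIntegral.integral_const_mul] at h1 h2
  have h4 : η ^ 2 ≤ f z ^ 2 := by
    rw [← sq_abs (f z)]
    exact pow_le_pow_left₀ hη.le hzη 2
  linarith

/-- Critical points of the energy inside the convexity region of the potential minimize the
energy among functions with values in that region. -/
theorem HasInterp.energy_le_of_critical {c k q : ℝ} (h : HasInterp c k) (hc : 0 < c) (hk : 0 < k)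
    (hq0 : 0 ≤ q) (hq : 4 * q < c) {V V₁ V₂ : ℝ → ℝ} (hV : ∀ s, HasDerivAt V (V₁ s) s)
    (hV₁ : ∀ s, HasDerivAt V₁ (V₂ s) s) {η : ℝ}
    (hV₂ : ∀ s, |s| ≤ η → 3 * k / 4 ≤ V₂ s) {a b : ℝ} (hab : 1 ≤ b - a) {φ ψ : ℕ → ℝ → ℝ}
    (hφ : DerivChain 4 φ) (hψ : DerivChain 2 ψ)
    (hode : ∀ x ∈ Set.Icc a b, 2 * φ 4 x + 2 * q * φ 2 x + V₁ (φ 0 x) = 0)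
    (hφη : ∀ x ∈ Set.Icc a b, |φ 0 x| ≤ η) (hψη : ∀ x ∈ Set.Icc a b, |ψ 0 x| ≤ η)
    (h0a : ψ 0 a = φ 0 a) (h1a : ψ 1 a = φ 1 a) (h0b : ψ 0 b = φ 0 b) (h1b : ψ 1 b = φ 1 b) :
    ∫ x in a..b, (V (φ 0 x) - q * φ 1 x ^ 2 + φ 2 x ^ 2) ≤
      ∫ x in a..b, (V (ψ 0 x) - q * ψ 1 x ^ 2 + ψ 2 x ^ 2) := by
  have hab' : a ≤ b := by linarith
  have hcV : Continuous V := continuous_iff_continuousAt.2 fun s => (hV s).continuousAt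
  have hχ : DerivChain 2 (ψ - φ) := hψ.sub (hφ.mono (by norm_num))
  set χ := ψ - φ with hχdef
  have hψχ : ∀ i x, ψ i x = φ i x + χ i x := fun i x => by simp [hχdef]
  have c0 := hφ.continuous (i := 0) (by norm_num)
  have c1 := hφ.continuous (i := 1) (by norm_num)
  have c2 := hφ.continuous (i := 2) (by norm_num)
  have c4 := hφ.continuous (i := 4) (by norm_num)
  have d0 := hχ.continuous (i := 0) (by norm_num)
  have d1 := hχ.continuous (i := 1) (by norm_num)
  have d2 := hχ.continuous (i := 2) le_rfl
  have e0 := hψ.continuous (i := 0) (by norm_num)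
  have e1 := hψ.continuous (i := 1) (by norm_num)
  have e2 := hψ.continuous (i := 2) le_rfl
  have hweak := integral_mul_eq_boundary_add hφ hχ q a b
  have z0a : χ 0 a = 0 := by simp [hχdef, h0a]
  have z1a : χ 1 a = 0 := by simp [hχdef, h1a]
  have z0b : χ 0 b = 0 := by simp [hχdef, h0b]
  have z1b : χ 1 b = 0 := by simp [hχdef, h1b]
  simp only [z0a, z1a, z0b, z1b, mul_zero, sub_zero, add_zero, zero_add] at hweak
  have hq1 := h.mul_integral_le hc hk.le hq0 hq.le hab hχ
  have hr : 4 * q / c < 1 := by rw [div_lt_one hc]; exact hq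
  have nA : 0 ≤ ∫ x in a..b, χ 0 x ^ 2 :=
    intervalIntegral.integral_nonneg hab' fun x _ => by positivity
  have nA₂ : 0 ≤ ∫ x in a..b, χ 2 x ^ 2 :=
    intervalIntegral.integral_nonneg hab' fun x _ => by positivity
  have hii : ∀ {g : ℝ → ℝ}, Continuous g → IntervalIntegrable g volume a b :=
    fun hg => hg.intervalIntegrable _ _
  have hpt : ∫ x in a..b, (V (φ 0 x) - q * φ 1 x ^ 2 + φ 2 x ^ 2 +
      (3 * k / 8 * χ 0 x ^ 2 - (2 * φ 4 x + 2 * q * φ 2 x) * χ 0 x +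
        (2 * (φ 2 x * χ 2 x) - 2 * q * (φ 1 x * χ 1 x)) + (χ 2 x ^ 2 - q * χ 1 x ^ 2))) ≤
      ∫ x in a..b, (V (ψ 0 x) - q * ψ 1 x ^ 2 + ψ 2 x ^ 2) := by
    refine intervalIntegral.integral_mono_on hab' (hii (by fun_prop)) (hii (by fun_prop))
      fun x hx => ?_
    have ht := le_taylor_remainder hV hV₁ (a := -η) (b := η) (m := 3 * k / 4)
      (fun s hs => hV₂ s (abs_le.2 hs)) (abs_le.1 (hφη x hx)) (abs_le.1 (hψη x hx))
    have ho := hode x hx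
    have hs : ψ 0 x - φ 0 x = χ 0 x := by rw [hψχ]; ring
    have hp : V₁ (φ 0 x) = -(2 * φ 4 x + 2 * q * φ 2 x) := by linarith
    rw [hs, hp] at ht
    rw [hψχ 1, hψχ 2]
    nlinarith
  have hrest : ∫ x in a..b,
      (3 * k / 8 * χ 0 x ^ 2 - (2 * φ 4 x + 2 * q * φ 2 x) * χ 0 x +
        (2 * (φ 2 x * χ 2 x) - 2 * q * (φ 1 x * χ 1 x)) + (χ 2 x ^ 2 - q * χ 1 x ^ 2)) =
      3 * k / 8 * (∫ x in a..b, χ 0 x ^ 2) + ((∫ x in a..b, χ 2 x ^ 2) -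
        q * ∫ x in a..b, χ 1 x ^ 2) := by
    rw [intervalIntegral.integral_add (hii (by fun_prop)) (hii (by fun_prop)),
      intervalIntegral.integral_add (hii (by fun_prop)) (hii (by fun_prop)),
      intervalIntegral.integral_sub (hii (by fun_prop)) (hii (by fun_prop)),
      intervalIntegral.integral_sub (hii (by fun_prop)) (hii (by fun_prop)),
      intervalIntegral.integral_sub (hii (by fun_prop)) (hii (by fun_prop)), hweak]
    simp only [intervalIntegral.integral_const_mul]
    ring
  rw [intervalIntegral.integral_add (hii (by fun_prop)) (hii (by fun_prop)), hrest] at hpt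
  nlinarith

/-- Coercivity of the energy. -/
theorem energy_coercive {V : ℝ → ℝ} (hV : Continuous V) (hV0 : ∀ s, 0 ≤ V s) {c q : ℝ}
    (hc : 0 < c) (hq0 : 0 ≤ q) (hq : 4 * q < c)
    (hloc : ∀ a b : ℝ, a < b → ∀ φ : ℕ → ℝ → ℝ, DerivChain 2 φ →
      c * ∫ x in a..b, φ 1 x ^ 2 ≤ (1 / (b - a) ^ 2) * (∫ x in a..b, V (φ 0 x)) +
        (b - a) ^ 2 * ∫ x in a..b, φ 2 x ^ 2)
    {a b e : ℝ} (hab : 1 ≤ b - a) {ψ : ℕ → ℝ → ℝ} (hψ : DerivChain 2 ψ)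
    (he : ∫ x in a..b, (V (ψ 0 x) - q * ψ 1 x ^ 2 + ψ 2 x ^ 2) ≤ e) :
    ∫ x in a..b, V (ψ 0 x) ≤ 4 / 3 * e ∧
      ∫ x in a..b, ψ 1 x ^ 2 ≤ (4 / 3 + 4 / (1 - 4 * q / c)) / c * e := by
  have hab' : a ≤ b := by linarith
  set r := 4 * q / c with hr
  have hr1 : 0 < 1 - r := by rw [sub_pos, hr, div_lt_one hc]; exact hq
  have e0 := hψ.continuous (i := 0) (by norm_num)
  have e1 := hψ.continuous (i := 1) (by norm_num)
  have e2 := hψ.continuous (i := 2) le_rfl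
  have hi := integral_le_of_partition (f := fun x => ψ 1 x ^ 2) (g := fun x => V (ψ 0 x))
    (h := fun x => ψ 2 x ^ 2) (by fun_prop) (by fun_prop) (by fun_prop) (fun x => hV0 _)
    (fun x => sq_nonneg _) (fun a b hab => hloc a b hab ψ hψ) hab
  rw [intervalIntegral.integral_add (Continuous.intervalIntegrable (by fun_prop) _ _)
      (Continuous.intervalIntegrable (by fun_prop) _ _),
    intervalIntegral.integral_sub (Continuous.intervalIntegrable (by fun_prop) _ _)
      (Continuous.intervalIntegrable (by fun_prop) _ _),
    intervalIntegral.integral_const_mul] at he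
  have n0 : 0 ≤ ∫ x in a..b, V (ψ 0 x) := intervalIntegral.integral_nonneg hab' fun x _ => hV0 _
  have n2 : 0 ≤ ∫ x in a..b, ψ 2 x ^ 2 :=
    intervalIntegral.integral_nonneg hab' fun x _ => sq_nonneg _
  set A₀ := ∫ x in a..b, V (ψ 0 x)
  set A₁ := ∫ x in a..b, ψ 1 x ^ 2
  set A₂ := ∫ x in a..b, ψ 2 x ^ 2
  have hqc : q / c ≤ 1 / 4 := by rw [div_le_iff₀ hc]; linarith
  have hqA : q * A₁ ≤ 1 / 4 * A₀ + r * A₂ := by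
    have t1 := mul_le_mul_of_nonneg_left hi (div_nonneg hq0 hc.le)
    have t2 : q / c * (c * A₁) = q * A₁ := by field_simp
    have t3 := mul_le_mul_of_nonneg_right hqc n0
    have t4 : r = 4 * (q / c) := by rw [hr]; ring
    rw [t2] at t1
    rw [t4]
    linarith
  have hA₀ : A₀ ≤ 4 / 3 * e := by nlinarith
  have hA₂ : A₂ ≤ 1 / (1 - r) * e := by
    rw [one_div_mul_eq_div, le_div_iff₀ hr1]
    nlinarith
  refine ⟨hA₀, ?_⟩
  rw [div_mul_eq_mul_div, le_div_iff₀ hc, add_mul, div_eq_mul_one_div 4 (1 - r), mul_assoc]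
  linarith

theorem DerivChain.iteratedDeriv_const_add {m i : ℕ} {φ : ℕ → ℝ → ℝ} (c : ℝ)
    (h : DerivChain (m + 1) φ) (hi : i ≤ m + 1) (hi0 : i ≠ 0) :
    iteratedDeriv i (fun x => c + φ 0 x) = φ i := by
  simpa [hi0] using (h.const_add c).iteratedDeriv_eq hi

theorem eres_const_add_chain (W : ℝ → ℝ) (q c : ℝ) {φ : ℕ → ℝ → ℝ} (h : DerivChain 2 φ) (a b : ℝ) :
    Eres W q (fun x => c + φ 0 x) a b =
      ∫ x in a..b, (W (c + φ 0 x) - q * φ 1 x ^ 2 + φ 2 x ^ 2) := by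
  have h1 := h.iteratedDeriv_const_add (m := 1) (i := 1) c (by norm_num) (by norm_num)
  have h2 := h.iteratedDeriv_const_add (m := 1) (i := 2) c (by norm_num) (by norm_num)
  rw [iteratedDeriv_succ, iteratedDeriv_one] at h2
  rw [iteratedDeriv_one] at h1
  rw [Eres, h2, h1]

/-- A function whose derivative stays close to `k` near the origin differs there from its
linearisation by the restriction of a globally Lipschitz function with small constant. -/
theorem exists_lipschitz_remainder {V₁ V₂ : ℝ → ℝ} (hV₁ : ∀ s, HasDerivAt V₁ (V₂ s) s)
    {k ε η : ℝ} (hε : 0 ≤ ε) (hη : 0 < η) (hV₂ : ∀ s, |s| ≤ η → |V₂ s - k| ≤ ε) :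
    ∃ N : ℝ → ℝ, Continuous N ∧ (∀ s t, |N s - N t| ≤ ε * |s - t|) ∧
      ∀ s, |s| ≤ η → N s = V₁ s - k * s := by
  have hlip : ∀ s ∈ Set.Icc (-η) η, ∀ t ∈ Set.Icc (-η) η,
      |(V₁ s - k * s) - (V₁ t - k * t)| ≤ ε * |s - t| := by
    intro s hs t ht
    refine (convex_Icc (-η) η).norm_image_sub_le_of_norm_hasDerivWithin_le
      (f := fun s => V₁ s - k * s) (f' := fun s => V₂ s - k) (fun x _ => ?_)
      (fun x hx => hV₂ x (abs_le.2 hx)) ht hs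
    simpa using ((hV₁ x).fun_sub ((hasDerivAt_id x).const_mul k)).hasDerivWithinAt
  have hle : -η ≤ η := by linarith
  have hcV₁ : Continuous V₁ := continuous_iff_continuousAt.2 fun s => (hV₁ s).continuousAt
  refine ⟨fun s => V₁ (Set.projIcc (-η) η hle s) - k * Set.projIcc (-η) η hle s, ?_,
    fun s t => ?_, fun s hs => ?_⟩
  · have hp : Continuous fun s => (Set.projIcc (-η) η hle s : ℝ) :=
      continuous_subtype_val.comp continuous_projIcc
    exact (hcV₁.comp hp).sub (continuous_const.mul hp)
  · exact (hlip _ (Set.projIcc _ _ hle s).2 _ (Set.projIcc _ _ hle t).2).trans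
      (mul_le_mul_of_nonneg_left (Set.abs_projIcc_sub_projIcc hle) hε)
  · simp only [Set.projIcc_of_mem hle (abs_le.1 hs)]

/-- Small boundary data admit a small minimizer near a nondegenerate zero of the potential. -/
theorem exists_small_minimizer {V V₁ V₂ : ℝ → ℝ} (hV : ∀ s, HasDerivAt V (V₁ s) s)
    (hV₁ : ∀ s, HasDerivAt V₁ (V₂ s) s) (hV0 : ∀ s, 0 ≤ V s) (hVz : V 0 = 0) (hV₁z : V₁ 0 = 0)
    {m k η c q : ℝ} (hm : 0 < m) (hmV : ∀ s ≤ 1, m * s ^ 2 ≤ V s) (hk : 0 < k) (hη : 0 < η)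
    (hη1 : η ≤ 1) (hV₂ : ∀ s, |s| ≤ η → |V₂ s - k| ≤ k / 4) (hc : 0 < c) (hq0 : 0 ≤ q)
    (hq : 4 * q < c)
    (hloc : ∀ a b : ℝ, a < b → ∀ φ : ℕ → ℝ → ℝ, DerivChain 2 φ →
      c * ∫ x in a..b, φ 1 x ^ 2 ≤ (1 / (b - a) ^ 2) * (∫ x in a..b, V (φ 0 x)) +
        (b - a) ^ 2 * ∫ x in a..b, φ 2 x ^ 2) :
    ∃ δ₀ > 0, ∃ C > 0, ∀ a b δ α₀ α₁ β₀ β₁ : ℝ, 1 ≤ b - a → δ < δ₀ →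
      |α₀| ≤ δ → |α₁| ≤ δ → |β₀| ≤ δ → |β₁| ≤ δ →
      ∃ φ : ℕ → ℝ → ℝ, DerivChain 4 φ ∧ φ 0 a = α₀ ∧ φ 1 a = α₁ ∧ φ 0 b = β₀ ∧ φ 1 b = β₁ ∧
        (∀ x ∈ Set.Icc a b, 2 * φ 4 x + 2 * q * φ 2 x + V₁ (φ 0 x) = 0) ∧
        (∀ i ≤ 4, ∫ x in a..b, φ i x ^ 2 ≤ (C * δ) ^ 2) ∧
        (∀ i ≤ 3, ∀ x ∈ Set.Icc a b, |φ i x| ≤ C * δ) ∧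
        ∀ ψ : ℕ → ℝ → ℝ, DerivChain 2 ψ → ψ 0 a = α₀ → ψ 1 a = α₁ → ψ 0 b = β₀ → ψ 1 b = β₁ →
          ∫ x in a..b, (V (φ 0 x) - q * φ 1 x ^ 2 + φ 2 x ^ 2) ≤
            ∫ x in a..b, (V (ψ 0 x) - q * ψ 1 x ^ 2 + ψ 2 x ^ 2) := by
  have hcV : Continuous V := continuous_iff_continuousAt.2 fun s => (hV s).continuousAt
  have hVk : ∀ s, |s| ≤ η → V s ≤ 5 * k / 8 * s ^ 2 := by
    intro s hs
    have := le_taylor_remainder (V := fun x => -V x) (V₁ := fun x => -V₁ x) (V₂ := fun x => -V₂ x)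
      (fun x => (hV x).neg) (fun x => (hV₁ x).neg) (a := -η) (b := η) (m := -(5 * k / 4))
      (fun x hx => by linarith [(abs_le.1 (hV₂ x (abs_le.2 hx))).2]) (s := 0) (t := s)
      ⟨by linarith, hη.le⟩ (abs_le.1 hs)
    simp only [hVz, hV₁z, sub_zero] at this
    linarith
  have hint : HasInterp c k := hasInterp_of_potential hcV hk.le hη
    (fun s hs => (hVk s hs).trans (by nlinarith [sq_nonneg s])) hloc
  obtain ⟨N, hNc, hN, hNeq⟩ := exists_lipschitz_remainder hV₁ (by positivity) hη hV₂
  have hN0 : N 0 = 0 := by rw [hNeq 0 (by simpa using hη.le), hV₁z]; simp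
  obtain ⟨C₁, hC₁, hbound⟩ := hint.exists_boundary_bound hc hk hq0 hq (5 * k / 4)
  have hr : 0 < 1 - 4 * q / c := by rw [sub_pos, div_lt_one hc]; exact hq
  set C₂ := (5 * k / 8 + 1) * C₁ with hC₂
  set K := C₁ + 1 + 1 / m * (4 / 3 * C₂) + (4 / 3 + 4 / (1 - 4 * q / c)) / c * C₂ with hK
  have hC₂0 : 0 < C₂ := by positivity
  have hp1 : 0 < 1 / m * (4 / 3 * C₂) := by positivity
  have hp2 : 0 < (4 / 3 + 4 / (1 - 4 * q / c)) / c * C₂ := by positivity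
  have hK0 : 0 < K := by positivity
  refine ⟨η / √K, by positivity, √C₁, by positivity, ?_⟩
  intro a b δ α₀ α₁ β₀ β₁ hab hδ hα₀ hα₁ hβ₀ hβ₁
  have hδ0 : 0 ≤ δ := (abs_nonneg _).trans hα₀
  have hKδ : K * δ ^ 2 < η ^ 2 := by
    rw [lt_div_iff₀ (by positivity)] at hδ
    have := pow_lt_pow_left₀ hδ (by positivity) (n := 2) (by norm_num)
    rw [mul_pow, Real.sq_sqrt hK0.le] at this
    linarith
  have hsq : (√C₁ * δ) ^ 2 = C₁ * δ ^ 2 := by rw [mul_pow, Real.sq_sqrt hC₁.le]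
  obtain ⟨φ, hφ, hode, h0a, h1a, h0b, h1b⟩ :=
    hint.exists_semilinear_solution hc hk hq0 hq hab hNc hN α₀ α₁ β₀ β₁
  have hNφ : ∀ x, |N (φ 0 x)| ≤ k / 4 * |φ 0 x| := fun x => by
    simpa [hN0] using hN (φ 0 x) 0
  obtain ⟨hL2, hLinf⟩ := hbound a b δ hab φ hφ
    (fun x hx => by
      rw [show 2 * φ 4 x + 2 * q * φ 2 x = -(k * φ 0 x) - N (φ 0 x) by linarith [hode x hx]]
      refine (abs_sub _ _).trans ?_
      rw [abs_neg, abs_mul, abs_of_pos hk]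
      linarith [hNφ x])
    (fun x hx => by
      rw [show 2 * φ 4 x + 2 * q * φ 2 x = -(k * φ 0 x) - N (φ 0 x) by linarith [hode x hx]]
      have : |N (φ 0 x) * φ 0 x| ≤ k / 4 * φ 0 x ^ 2 := by
        rw [abs_mul, ← sq_abs, pow_two, ← mul_assoc]
        exact mul_le_mul_of_nonneg_right (hNφ x) (abs_nonneg _)
      linarith [(abs_le.1 this).1])
    (h0a ▸ hα₀) (h1a ▸ hα₁) (h0b ▸ hβ₀) (h1b ▸ hβ₁)
  have hφη : ∀ x ∈ Set.Icc a b, |φ 0 x| ≤ η := fun x hx => by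
    refine abs_le_of_sq_le_sq ((hLinf 0 (by norm_num) x hx).trans ?_) hη.le
    have : C₁ * δ ^ 2 ≤ K * δ ^ 2 := mul_le_mul_of_nonneg_right (by linarith) (sq_nonneg δ)
    linarith
  have hcrit : ∀ x ∈ Set.Icc a b, 2 * φ 4 x + 2 * q * φ 2 x + V₁ (φ 0 x) = 0 := fun x hx => by
    have := hode x hx
    rw [hNeq _ (hφη x hx)] at this
    linarith
  refine ⟨φ, hφ, h0a, h1a, h0b, h1b, hcrit, fun i hi => hsq ▸ hL2 i hi, fun i hi x hx =>
    abs_le_of_sq_le_sq (hsq ▸ hLinf i hi x hx) (by positivity), ?_⟩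
  intro ψ hψ g0a g1a g0b g1b
  have c0 := hφ.continuous (i := 0) (by norm_num)
  have c1 := hφ.continuous (i := 1) (by norm_num)
  have c2 := hφ.continuous (i := 2) (by norm_num)
  have hEφ : ∫ x in a..b, (V (φ 0 x) - q * φ 1 x ^ 2 + φ 2 x ^ 2) ≤ C₂ * δ ^ 2 := by
    calc ∫ x in a..b, (V (φ 0 x) - q * φ 1 x ^ 2 + φ 2 x ^ 2)
        ≤ ∫ x in a..b, (5 * k / 8 * φ 0 x ^ 2 + φ 2 x ^ 2) := by
          refine intervalIntegral.integral_mono_on (by linarith)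
            (Continuous.intervalIntegrable (by fun_prop) _ _)
            (Continuous.intervalIntegrable (by fun_prop) _ _) fun x hx => ?_
          have := hVk _ (hφη x hx)
          have : 0 ≤ q * φ 1 x ^ 2 := by positivity
          linarith
      _ = 5 * k / 8 * (∫ x in a..b, φ 0 x ^ 2) + ∫ x in a..b, φ 2 x ^ 2 := by
          rw [intervalIntegral.integral_add (Continuous.intervalIntegrable (by fun_prop) _ _)
            (Continuous.intervalIntegrable (by fun_prop) _ _),
            intervalIntegral.integral_const_mul]
      _ ≤ 5 * k / 8 * (C₁ * δ ^ 2) + C₁ * δ ^ 2 := by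
          gcongr
          · exact hL2 0 (by norm_num)
          · exact hL2 2 (by norm_num)
      _ = C₂ * δ ^ 2 := by rw [hC₂]; ring
  by_cases hle : ∫ x in a..b, (V (ψ 0 x) - q * ψ 1 x ^ 2 + ψ 2 x ^ 2) ≤
      ∫ x in a..b, (V (φ 0 x) - q * φ 1 x ^ 2 + φ 2 x ^ 2)
  · obtain ⟨hVψ, hψ1⟩ := energy_coercive hcV hV0 hc hq0 hq hloc hab hψ (hle.trans hEφ)
    have hψη : ∀ x ∈ Set.Icc a b, |ψ 0 x| ≤ η := by
      refine abs_le_of_energy_lt hcV hV0 hm hη hη1 hmV (f' := ψ 1)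
        (hψ.hasDerivAt 0 (by norm_num)) (hψ.continuous (by norm_num)) (lt_of_le_of_lt ?_ hKδ)
      have h1 : ψ 0 a ^ 2 ≤ δ ^ 2 := by rw [g0a]; exact sq_le_sq' (abs_le.1 hα₀).1 (abs_le.1 hα₀).2
      have h2 : 1 / m * (∫ x in a..b, V (ψ 0 x)) ≤ 1 / m * (4 / 3 * (C₂ * δ ^ 2)) :=
        mul_le_mul_of_nonneg_left hVψ (by positivity)
      have h3 : 0 ≤ C₁ * δ ^ 2 := by positivity
      calc _ ≤ δ ^ 2 + (1 / m * (4 / 3 * (C₂ * δ ^ 2)) +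
            (4 / 3 + 4 / (1 - 4 * q / c)) / c * (C₂ * δ ^ 2)) := by linarith
        _ ≤ K * δ ^ 2 := by rw [hK]; linarith
    exact hint.energy_le_of_critical hc hk hq0 hq hV hV₁
      (fun s hs => by linarith [(abs_le.1 (hV₂ s hs)).1]) hab hφ hψ hcrit hφη hψη
      (g0a.trans h0a.symm) (g1a.trans h1a.symm) (g0b.trans h0b.symm) (g1b.trans h1b.symm)
  · exact (not_le.1 hle).le

theorem stmt7 (W : ℝ → ℝ) (hW : DoubleWell W) (qs : ℝ) (hqs : 0 < qs)
    -- qs is the constant of the one-dimensional interpolation inequality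
    (hinterp : ∀ a b : ℝ, a < b → ∀ u : ℝ → ℝ, ContDiff ℝ 2 u →
      qs * ∫ x in a..b, (deriv u x)^2 ≤
        (1 / (b - a)^2) * (∫ x in a..b, W (u x)) +
          (b - a)^2 * ∫ x in a..b, (deriv (deriv u) x)^2)
    (q : ℝ) (hq0 : 0 ≤ q) (hq : q < qs / 4) :
    ∃ δ₀ > (0:ℝ), ∃ C > (0:ℝ),
      ∀ a b : ℝ, b - a > 1 →
      ∀ δ α₀ α₁ β₀ β₁ : ℝ, δ < δ₀ →
        Real.sqrt (α₀^2 + α₁^2) ≤ δ → Real.sqrt (β₀^2 + β₁^2) ≤ δ →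
      ∃ v : ℝ → ℝ, ContDiff ℝ 4 v ∧
        v a = -1 + α₀ ∧ deriv v a = α₁ ∧ v b = -1 + β₀ ∧ deriv v b = β₁ ∧
        -- v minimizes E(·; I) among C² functions with the same boundary conditions
        (∀ u : ℝ → ℝ, ContDiff ℝ 2 u →
          u a = -1 + α₀ → deriv u a = α₁ → u b = -1 + β₀ → deriv u b = β₁ →
          Eres W q v a b ≤ Eres W q u a b) ∧
        -- v solves the Euler–Lagrange equation
        (∀ x ∈ Set.Ioo a b,
          2 * iteratedDeriv 4 v x + 2 * q * iteratedDeriv 2 v x + deriv W (v x) = 0) ∧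
        -- L∞ bound on v + 1
        (∀ x ∈ Set.Icc a b, |v x + 1| ≤ C * δ) ∧
        -- L² bounds on derivatives of order 1,…,4
        (∀ k ∈ Finset.Icc 1 4, ∫ x in a..b, (iteratedDeriv k v x)^2 ≤ (C * δ)^2) ∧
        -- L∞ bounds on derivatives of order 1,…,3
        (∀ k ∈ Finset.Icc 1 3, ∀ x ∈ Set.Icc a b, |iteratedDeriv k v x| ≤ C * δ) := by
  obtain ⟨V₂, hV, hV₁, hVz, hV₁z, ⟨m, hm, hmV⟩, k, hk, η, hη, hη1, hV₂⟩ := hW.exists_expansion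
  have hloc : ∀ a b : ℝ, a < b → ∀ φ : ℕ → ℝ → ℝ, DerivChain 2 φ →
      qs * ∫ x in a..b, φ 1 x ^ 2 ≤ (1 / (b - a) ^ 2) * (∫ x in a..b, W (-1 + φ 0 x)) +
        (b - a) ^ 2 * ∫ x in a..b, φ 2 x ^ 2 := by
    intro a b hab φ hφ
    have h1 := hφ.iteratedDeriv_const_add (m := 1) (i := 1) (-1) (by norm_num) (by norm_num)
    have h2 := hφ.iteratedDeriv_const_add (m := 1) (i := 2) (-1) (by norm_num) (by norm_num)
    rw [iteratedDeriv_succ, iteratedDeriv_one] at h2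
    rw [iteratedDeriv_one] at h1
    have := hinterp a b hab (fun x => -1 + φ 0 x)
      (by simpa using (hφ.const_add (m := 1) (-1)).contDiff)
    rwa [h2, h1] at this
  obtain ⟨δ₀, hδ₀, C, hC, H⟩ := exists_small_minimizer (V := fun s => W (-1 + s))
    (V₁ := fun s => deriv W (-1 + s)) hV hV₁ (fun s => hW.2.2.1 _) (by simpa using hVz)
    (by simpa using hV₁z) hm hmV hk hη hη1 hV₂ hqs hq0 (by linarith) hloc
  refine ⟨δ₀, hδ₀, C, hC, ?_⟩
  intro a b hab δ α₀ α₁ β₀ β₁ hδ hα hβ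
  obtain ⟨φ, hφ, h0a, h1a, h0b, h1b, hode, hL2, hLinf, hmin⟩ := H a b δ α₀ α₁ β₀ β₁ hab.le hδ
    ((abs_le_sqrt (by nlinarith [sq_nonneg α₁])).trans hα)
    ((abs_le_sqrt (by nlinarith [sq_nonneg α₀])).trans hα)
    ((abs_le_sqrt (by nlinarith [sq_nonneg β₁])).trans hβ)
    ((abs_le_sqrt (by nlinarith [sq_nonneg β₀])).trans hβ)
  have hd : ∀ i ≤ 4, i ≠ 0 → iteratedDeriv i (fun x => -1 + φ 0 x) = φ i := fun i hi hi0 =>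
    hφ.iteratedDeriv_const_add (m := 3) (-1) hi hi0
  have hd1 : deriv (fun x => -1 + φ 0 x) = φ 1 := by
    rw [← iteratedDeriv_one]; exact hd 1 (by norm_num) (by norm_num)
  refine ⟨fun x => -1 + φ 0 x, by simpa using (hφ.const_add (m := 3) (-1)).contDiff,
    by simp [h0a], by rw [hd1, h1a], by simp [h0b], by rw [hd1, h1b], ?_, ?_, ?_, ?_, ?_⟩
  · intro u hu u0a u1a u0b u1b
    have hψ := (DerivChain.of_contDiff (n := 2) hu).const_add (m := 1) 1
    have hEu := eres_const_add_chain W q (-1) hψ a b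
    rw [eres_const_add_chain W q (-1) (hφ.mono (by norm_num))]
    simp only [if_true, iteratedDeriv_zero, neg_add_cancel_left] at hEu
    rw [hEu]
    have := hmin _ hψ (by simp [u0a]) (by simp [iteratedDeriv_one, u1a]) (by simp [u0b])
      (by simp [iteratedDeriv_one, u1b])
    simpa using this
  · intro x hx
    rw [hd 4 le_rfl (by norm_num), hd 2 (by norm_num) (by norm_num)]
    exact hode x (Set.Ioo_subset_Icc_self hx)
  · intro x hx
    simpa using hLinf 0 (by norm_num) x hx
  · intro i hi
    rw [Finset.mem_Icc] at hi
    rw [hd i hi.2 (by omega)]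
    exact hL2 i hi.2
  · intro i hi x hx
    rw [Finset.mem_Icc] at hi
    rw [hd i (by omega) (by omega)]
    exact hLinf i hi.2 x hx
end

section
/- Let F : ℝ⁴ → ℝ⁴ be a C⁴ mapping with F(x₀) = 0 for some x₀ ∈ ℝ⁴, and assume that the complexification of the Fréchet derivative DF(x₀) has exactly the four (distinct) eigenvalues γ + δi, γ − δi, −γ + δi, −γ − δi, where γ > 0 and δ ≠ 0. Then for every 0 < λ ≤ γ there exist constants C > 0, T₀ > 0 and R > 0 such that for all T > T₀, if x : [0,T] → ℝ⁴ is differentiable, satisfies x'(t) = F(x(t)) for all t ∈ [0,T], and x(t) ∈ B(x₀, R) for all t ∈ [0,T], then |x(t) − x₀| ≤ C exp(−λT/2) for all t ∈ [λT/(2γ), T − λT/(2γ)]. In particular, taking λ = γ, |x(T/2) − x₀| ≤ C exp(−γT/2). -/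
open MeasureTheory Real

theorem exists_leftEigenvector {ι : Type*} [Fintype ι] [DecidableEq ι] {A : Matrix ι ι ℂ} {μ : ℂ}
    (h : μ ∈ A.charpoly.roots) :
    ∃ v : ι → ℂ, v ≠ 0 ∧ Matrix.vecMul v A = μ • v := by
  have h0 : (Matrix.scalar ι μ - A).det = 0 := by
    rw [← Matrix.eval_charpoly]
    exact Polynomial.isRoot_of_mem_roots h
  obtain ⟨v, hv, h1⟩ := Matrix.exists_vecMul_eq_zero_iff.2 h0
  refine ⟨v, hv, ?_⟩
  rw [Matrix.vecMul_sub, sub_eq_zero] at h1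
  rw [← h1]
  ext i
  simp [Matrix.scalar_apply, Matrix.vecMul_diagonal, mul_comm]

theorem eq_zero_of_leftEigenvectors {M : Matrix (Fin 4) (Fin 4) ℝ} {μ ν : ℂ} {v w : Fin 4 → ℂ}
    (hv : v ≠ 0) (hw : w ≠ 0)
    (hvM : Matrix.vecMul v (M.map (fun r : ℝ => (r : ℂ))) = μ • v)
    (hwM : Matrix.vecMul w (M.map (fun r : ℝ => (r : ℂ))) = ν • w)
    (hμ : μ.im ≠ 0) (hν : ν.im ≠ 0) (hμν : μ.re ≠ ν.re)
    {y : Fin 4 → ℝ} (hvy : ∑ i, y i • v i = 0) (hwy : ∑ i, y i • w i = 0) : y = 0 := by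
  have conj : ∀ {μ : ℂ} {v : Fin 4 → ℂ},
      Matrix.vecMul v (M.map (fun r : ℝ => (r : ℂ))) = μ • v →
      Matrix.vecMul (star v) (M.map (fun r : ℝ => (r : ℂ))) = (star μ) • star v := by
    intro μ v h
    rw [← star_smul, ← h]
    ext i
    simp [Matrix.vecMul, dotProduct]
  have eig : ∀ {μ : ℂ} {v : Fin 4 → ℂ}, v ≠ 0 →
      Matrix.vecMul v (M.map (fun r : ℝ => (r : ℂ))) = μ • v →
      Module.End.HasEigenvector (Matrix.toLin' (M.map (fun r : ℝ => (r : ℂ))).transpose) μ v := by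
    intro μ v h0 h
    refine ⟨Module.End.mem_eigenspace_iff.2 ?_, h0⟩
    rw [Matrix.toLin'_apply, Matrix.mulVec_transpose, h]
  have hli := Module.End.eigenvectors_linearIndependent'
    (Matrix.toLin' (M.map (fun r : ℝ => (r : ℂ))).transpose)
    ![μ, star μ, ν, star ν] (by
      have h1 : μ ≠ star μ := fun h => hμ (by
        have := congrArg Complex.im h; simp at this; linarith)
      have h2 : ν ≠ star ν := fun h => hν (by
        have := congrArg Complex.im h; simp at this; linarith)
      have h3 : μ ≠ ν := fun h => hμν (congrArg Complex.re h)
      have h4 : μ ≠ star ν := fun h => hμν (by simpa using congrArg Complex.re h)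
      have h5 : star μ ≠ ν := fun h => hμν (by simpa using congrArg Complex.re h)
      have h6 : star μ ≠ star ν := fun h => h3 (star_injective h)
      intro i j hij
      fin_cases i <;> fin_cases j <;> simp_all [eq_comm])
    ![v, star v, w, star w] (by
      intro i
      fin_cases i
      · exact eig hv hvM
      · exact eig (star_ne_zero.2 hv) (conj hvM)
      · exact eig hw hwM
      · exact eig (star_ne_zero.2 hw) (conj hwM))
  have hU : IsUnit (Matrix.of ![v, star v, w, star w]) :=
    Matrix.linearIndependent_rows_iff_isUnit.1 hli
  have dot : ∀ {v : Fin 4 → ℂ}, ∑ i, y i • v i = 0 →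
      v ⬝ᵥ (fun i => (y i : ℂ)) = 0 ∧ star v ⬝ᵥ (fun i => (y i : ℂ)) = 0 := by
    intro v h
    have h1 : v ⬝ᵥ (fun i => (y i : ℂ)) = 0 := by
      rw [← h]; simp [dotProduct, mul_comm]
    refine ⟨h1, ?_⟩
    rw [← star_zero, ← h1]
    simp [dotProduct]
  have hz : (fun i => (y i : ℂ)) = 0 := by
    apply Matrix.mulVec_injective_of_isUnit hU
    rw [Matrix.mulVec_zero]
    ext i
    fin_cases i
    · exact (dot hvy).1
    · exact (dot hvy).2
    · exact (dot hwy).1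
    · exact (dot hwy).2
  ext i
  simpa using congrFun hz i

theorem exists_spectral_coordinates
    (A : EuclideanSpace ℝ (Fin 4) →L[ℝ] EuclideanSpace ℝ (Fin 4)) {μ ν : ℂ}
    (hμA : μ ∈ (((LinearMap.toMatrix (EuclideanSpace.basisFun (Fin 4) ℝ).toBasis
      (EuclideanSpace.basisFun (Fin 4) ℝ).toBasis A.toLinearMap).map
        (fun r : ℝ => (r : ℂ))).charpoly).roots)
    (hνA : ν ∈ (((LinearMap.toMatrix (EuclideanSpace.basisFun (Fin 4) ℝ).toBasis
      (EuclideanSpace.basisFun (Fin 4) ℝ).toBasis A.toLinearMap).map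
        (fun r : ℝ => (r : ℂ))).charpoly).roots)
    (hμ : μ.im ≠ 0) (hν : ν.im ≠ 0) (hμν : μ.re ≠ ν.re) :
    ∃ p q : EuclideanSpace ℝ (Fin 4) →L[ℝ] ℂ, (∀ y, p (A y) = μ * p y) ∧
      (∀ y, q (A y) = ν * q y) ∧ ∃ c > 0, ∀ y, ‖y‖ ≤ c * (‖p y‖ + ‖q y‖) := by
  set M := LinearMap.toMatrix (EuclideanSpace.basisFun (Fin 4) ℝ).toBasis
      (EuclideanSpace.basisFun (Fin 4) ℝ).toBasis A.toLinearMap with hM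
  obtain ⟨v, hv, hvM⟩ := exists_leftEigenvector hμA
  obtain ⟨w, hw, hwM⟩ := exists_leftEigenvector hνA
  have hA : ∀ y i, A y i = ∑ j, M i j * y j := by
    intro y i
    have h := congrFun (LinearMap.toMatrix_mulVec_repr (EuclideanSpace.basisFun (Fin 4) ℝ).toBasis
      (EuclideanSpace.basisFun (Fin 4) ℝ).toBasis A.toLinearMap y) i
    rw [← hM] at h
    simpa [Matrix.mulVec, dotProduct] using h.symm
  let f (v : Fin 4 → ℂ) : EuclideanSpace ℝ (Fin 4) →L[ℝ] ℂ :=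
    ∑ i, (EuclideanSpace.proj i : EuclideanSpace ℝ (Fin 4) →L[ℝ] ℝ).smulRight (v i)
  have hf : ∀ v y, f v y = ∑ i, y i • v i := by
    intro v y
    simp [f]
  have heig : ∀ {μ : ℂ} {v : Fin 4 → ℂ},
      Matrix.vecMul v (M.map (fun r : ℝ => (r : ℂ))) = μ • v → ∀ y, f v (A y) = μ * f v y := by
    intro μ v h y
    have h' : ∀ j, ∑ i, v i * (M i j : ℂ) = μ * v j := fun j => by
      simpa [Matrix.vecMul, dotProduct] using congrFun h j
    simp only [hf, hA, Complex.real_smul, Complex.ofReal_sum, Complex.ofReal_mul, Finset.sum_mul,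
      Finset.mul_sum]
    rw [Finset.sum_comm]
    refine Finset.sum_congr rfl fun j _ => ?_
    rw [mul_left_comm, ← h' j, Finset.mul_sum]
    exact Finset.sum_congr rfl fun i _ => by ring
  refine ⟨f v, f w, heig hvM, heig hwM, ?_⟩
  have hinj : Function.Injective ((f v).prod (f w)).toLinearMap := by
    rw [injective_iff_map_eq_zero]
    intro y hy
    have hy' : f v y = 0 ∧ f w y = 0 := by simpa using hy
    rw [hf, hf] at hy'
    ext i
    exact congrFun (eq_zero_of_leftEigenvectors (y := fun i => y i) hv hw hvM hwM hμ hν hμν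
      hy'.1 hy'.2) i
  obtain ⟨K, hK, hanti⟩ := (LinearMap.injective_iff_antilipschitz _).1 hinj
  refine ⟨K, by exact_mod_cast hK, fun y => ?_⟩
  have h := hanti.le_mul_dist y 0
  rw [map_zero, dist_zero_right, dist_zero_right] at h
  refine h.trans (mul_le_mul_of_nonneg_left ?_ K.2)
  exact max_le (le_add_of_nonneg_right (norm_nonneg _)) (le_add_of_nonneg_left (norm_nonneg _))

theorem ContDiffAt.exists_norm_sub_le_sq {E G : Type*} [NormedAddCommGroup E] [NormedSpace ℝ E]
    [NormedAddCommGroup G] [NormedSpace ℝ G] {f : E → G} {x₀ : E} (hf : ContDiffAt ℝ 2 f x₀) :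
    ∃ K ≥ 0, ∃ r > 0, ∀ x ∈ Metric.ball x₀ r,
      ‖f x - f x₀ - fderiv ℝ f x₀ (x - x₀)‖ ≤ K * ‖x - x₀‖ ^ 2 := by
  obtain ⟨K, s, hs, hK⟩ := (hf.fderiv_right (m := 1) (by norm_num)).exists_lipschitzOnWith
  have hd : ∀ᶠ x in nhds x₀, DifferentiableAt ℝ f x :=
    (hf.eventually (by simp)).mono fun x hx => hx.differentiableAt (by norm_num)
  obtain ⟨r, hr, hball⟩ := Metric.mem_nhds_iff.1 (Filter.inter_mem hs hd)
  refine ⟨K, K.2, r, hr, fun x hx => ?_⟩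
  have hsub : Metric.closedBall x₀ ‖x - x₀‖ ⊆ Metric.ball x₀ r :=
    Metric.closedBall_subset_ball (by simpa [dist_eq_norm] using hx)
  have h := (convex_closedBall x₀ ‖x - x₀‖).norm_image_sub_le_of_norm_fderiv_le'
    (𝕜 := ℝ) (f := f) (φ := fderiv ℝ f x₀) (C := K * ‖x - x₀‖) (x := x₀) (y := x)
    (fun z hz => (hball (hsub hz)).2)
    (fun z hz => by
      have h1 := hK.dist_le_mul z (hball (hsub hz)).1 x₀ (mem_of_mem_nhds hs)
      rw [dist_eq_norm] at h1
      exact h1.trans (mul_le_mul_of_nonneg_left hz K.2))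
    (Metric.mem_closedBall_self (norm_nonneg _)) (by simp [dist_eq_norm])
  rwa [mul_assoc, ← sq] at h

theorem two_mul_norm_sq_sub_norm_sq_le {γ δ₁ δ₂ T : ℝ} {s u n m : ℝ → ℂ} (hγ : 0 < γ)
    (hs : ∀ t ∈ Set.Icc 0 T, HasDerivAt s ((-γ + δ₁ * Complex.I) * s t + n t) t)
    (hu : ∀ t ∈ Set.Icc 0 T, HasDerivAt u ((γ + δ₂ * Complex.I) * u t + m t) t)
    (hn : ∀ t ∈ Set.Icc 0 T, ‖n t‖ ≤ γ / 7 * (‖s t‖ + ‖u t‖))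
    (hm : ∀ t ∈ Set.Icc 0 T, ‖m t‖ ≤ γ / 7 * (‖s t‖ + ‖u t‖))
    {t : ℝ} (ht : t ∈ Set.Icc 0 T) :
    2 * ‖s t‖ ^ 2 - ‖u t‖ ^ 2 ≤ 2 * ‖s 0‖ ^ 2 * exp (-(3 / 2 * γ * t)) := by
  have key : ∀ τ ∈ Set.Icc 0 T, ∃ d ≤ (0 : ℝ),
      HasDerivAt (fun r => exp (3 / 2 * γ * r) * (2 * ‖s r‖ ^ 2 - ‖u r‖ ^ 2)) d τ := by
    intro τ hτ
    have h1 := (hs τ hτ).norm_sq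
    have h2 := (hu τ hτ).norm_sq
    have h3 : HasDerivAt (fun r => exp (3 / 2 * γ * r)) _ τ :=
      ((hasDerivAt_id τ).const_mul (3 / 2 * γ)).exp
    refine ⟨_, ?_, h3.mul ((h1.const_mul 2).sub h2)⟩
    have e1 : ∀ (a b : ℝ) (z w : ℂ),
        inner ℝ z ((a + b * Complex.I) * z + w) = a * ‖z‖ ^ 2 + inner ℝ z w := by
      intro a b z w
      rw [inner_add_right]
      congr 1
      rw [Complex.sq_norm, Complex.normSq_apply, Complex.inner]
      simp
      ring
    have e2 := e1 (-γ) δ₁ (s τ) (n τ)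
    push_cast at e2
    simp only [id, mul_one]
    rw [e2, e1 γ δ₂]
    have b1 := (le_abs_self _).trans (abs_real_inner_le_norm (s τ) (n τ))
    have b2 := (neg_le_abs _).trans (abs_real_inner_le_norm (u τ) (m τ))
    have c1 := mul_le_mul_of_nonneg_left (hn τ hτ) (norm_nonneg (s τ))
    have c2 := mul_le_mul_of_nonneg_left (hm τ hτ) (norm_nonneg (u τ))
    have e := exp_pos (3 / 2 * γ * τ)
    generalize inner ℝ (s τ) (n τ) = I₁ at *
    generalize inner ℝ (u τ) (m τ) = I₂ at *
    generalize ‖s τ‖ = p at *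
    generalize ‖u τ‖ = q at *
    have := mul_nonneg hγ.le (sq_nonneg (p - q))
    have hp := mul_nonneg hγ.le (sq_nonneg p)
    have hq := mul_nonneg hγ.le (sq_nonneg q)
    have main : 3 / 2 * γ * (2 * p ^ 2 - q ^ 2) + (2 * (2 * (-γ * p ^ 2 + I₁))
        - 2 * (γ * q ^ 2 + I₂)) ≤ 0 := by nlinarith
    nlinarith [mul_nonneg e.le (neg_nonneg.2 main)]
  have anti : AntitoneOn (fun r => exp (3 / 2 * γ * r) * (2 * ‖s r‖ ^ 2 - ‖u r‖ ^ 2))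
      (Set.Icc 0 T) := by
    apply antitoneOn_of_deriv_nonpos (convex_Icc 0 T)
    · intro τ hτ
      obtain ⟨d, -, h⟩ := key τ hτ
      exact h.continuousAt.continuousWithinAt
    · intro τ hτ
      obtain ⟨d, -, h⟩ := key τ (interior_subset hτ)
      exact h.differentiableAt.differentiableWithinAt
    · intro τ hτ
      obtain ⟨d, hd, h⟩ := key τ (interior_subset hτ)
      rwa [h.deriv]
  have h := anti (Set.left_mem_Icc.2 (ht.1.trans ht.2)) ht ht.1
  simp only [mul_zero, exp_zero, one_mul] at h
  rw [exp_neg, ← div_eq_mul_inv, le_div_iff₀ (exp_pos _)]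
  nlinarith [sq_nonneg ‖u 0‖]

theorem norm_sq_add_norm_sq_le {γ δ₁ δ₂ T : ℝ} {s u n m : ℝ → ℂ} (hγ : 0 < γ)
    (hs : ∀ t ∈ Set.Icc 0 T, HasDerivAt s ((-γ + δ₁ * Complex.I) * s t + n t) t)
    (hu : ∀ t ∈ Set.Icc 0 T, HasDerivAt u ((γ + δ₂ * Complex.I) * u t + m t) t)
    (hn : ∀ t ∈ Set.Icc 0 T, ‖n t‖ ≤ γ / 7 * (‖s t‖ + ‖u t‖))
    (hm : ∀ t ∈ Set.Icc 0 T, ‖m t‖ ≤ γ / 7 * (‖s t‖ + ‖u t‖))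
    (hs0 : ‖s 0‖ ≤ 1) (huT : ‖u T‖ ≤ 1) {t : ℝ} (ht : t ∈ Set.Icc 0 T) :
    ‖s t‖ ^ 2 + ‖u t‖ ^ 2 ≤ 2 * (exp (-(3 / 2 * γ * t)) + exp (-(3 / 2 * γ * (T - t)))) := by
  have hrev : ∀ τ ∈ Set.Icc 0 T, T - τ ∈ Set.Icc 0 T := fun τ hτ =>
    ⟨by linarith [hτ.2], by linarith [hτ.1]⟩
  have h1 := two_mul_norm_sq_sub_norm_sq_le hγ hs hu hn hm ht
  have h2 := two_mul_norm_sq_sub_norm_sq_le (s := fun τ => u (T - τ)) (u := fun τ => s (T - τ))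
    (n := fun τ => -m (T - τ)) (m := fun τ => -n (T - τ)) (δ₁ := -δ₂) (δ₂ := -δ₁) hγ
    (fun τ hτ => ((hu _ (hrev τ hτ)).comp_const_sub T τ).congr_deriv (by push_cast; ring))
    (fun τ hτ => ((hs _ (hrev τ hτ)).comp_const_sub T τ).congr_deriv (by push_cast; ring))
    (fun τ hτ => by rw [norm_neg, add_comm]; exact hm _ (hrev τ hτ))
    (fun τ hτ => by rw [norm_neg, add_comm]; exact hn _ (hrev τ hτ)) (hrev t ht)
  simp only [sub_sub_cancel, sub_zero] at h2
  have h3 : ‖s 0‖ ^ 2 ≤ 1 := pow_le_one₀ (norm_nonneg _) hs0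
  have h4 : ‖u T‖ ^ 2 ≤ 1 := pow_le_one₀ (norm_nonneg _) huT
  have h5 := mul_le_mul_of_nonneg_right h3 (exp_pos (-(3 / 2 * γ * t))).le
  have h6 := mul_le_mul_of_nonneg_right h4 (exp_pos (-(3 / 2 * γ * (T - t)))).le
  linarith

theorem norm_stable_le {γ δ K T : ℝ} {s n : ℝ → ℂ} (hγ : 0 < γ) (hK : 0 ≤ K)
    (hs : ∀ t ∈ Set.Icc 0 T, HasDerivAt s ((-γ + δ * Complex.I) * s t + n t) t)
    (hn : ∀ t ∈ Set.Icc 0 T,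
      ‖n t‖ ≤ K * (exp (-(3 / 2 * γ * t)) + exp (-(3 / 2 * γ * (T - t)))))
    (hs0 : ‖s 0‖ ≤ 1) {t : ℝ} (ht : t ∈ Set.Icc 0 T) :
    ‖s t‖ ≤ (1 + 2 * K / γ) * (exp (-(γ * t)) + exp (-(γ * (T - t)))) := by
  have hnorm : ∀ τ : ℝ, ‖Complex.exp ((γ - δ * Complex.I) * τ)‖ = exp (γ * τ) := by
    intro τ
    rw [Complex.norm_exp]
    simp
  have hf : ∀ τ ∈ Set.Icc 0 T, HasDerivAt
      (fun r : ℝ => Complex.exp ((γ - δ * Complex.I) * r) * s r)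
      (Complex.exp ((γ - δ * Complex.I) * τ) * n τ) τ := by
    intro τ hτ
    have h1 : HasDerivAt (fun r : ℝ => Complex.exp ((γ - δ * Complex.I) * r)) _ τ :=
      ((Complex.ofRealCLM.hasDerivAt (x := τ)).const_mul (γ - δ * Complex.I)).cexp
    refine (h1.mul (hs τ hτ)).congr_deriv ?_
    simp only [Complex.ofRealCLM_apply, Complex.ofReal_one]
    ring
  have hB : ∀ τ : ℝ, HasDerivAt (fun r => 1 + K * (2 / γ * (1 - exp (-(γ / 2) * r))
      + 2 / (5 * γ) * exp (5 / 2 * γ * r - 3 / 2 * γ * T)))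
      (K * (exp (-(γ / 2) * τ) + exp (5 / 2 * γ * τ - 3 / 2 * γ * T))) τ := by
    intro τ
    have h1 : HasDerivAt (fun r => exp (-(γ / 2) * r)) _ τ :=
      ((hasDerivAt_id τ).const_mul (-(γ / 2))).exp
    have h2 : HasDerivAt (fun r => exp (5 / 2 * γ * r - 3 / 2 * γ * T)) _ τ :=
      (((hasDerivAt_id τ).const_mul (5 / 2 * γ)).sub_const (3 / 2 * γ * T)).exp
    refine ((((h1.const_sub 1).const_mul (2 / γ)).add
      (h2.const_mul (2 / (5 * γ)))).const_mul K |>.const_add 1).congr_deriv ?_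
    simp only [id]
    field_simp
  have h := image_norm_le_of_norm_deriv_right_le_deriv_boundary
    (fun τ hτ => (hf τ hτ).continuousAt.continuousWithinAt)
    (fun τ hτ => (hf τ (Set.Ico_subset_Icc_self hτ)).hasDerivWithinAt)
    (by
      have := exp_pos (-(3 / 2 * γ * T))
      simp
      exact hs0.trans (le_add_of_nonneg_right (by positivity)))
    hB
    (fun τ hτ => by
      rw [norm_mul, hnorm]
      refine (mul_le_mul_of_nonneg_left (hn τ (Set.Ico_subset_Icc_self hτ))
        (exp_pos _).le).trans_eq ?_
      rw [mul_left_comm, mul_add, ← exp_add, ← exp_add]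
      ring_nf) ht
  rw [norm_mul, hnorm] at h
  have e1 : 2 / γ * (1 - exp (-(γ / 2) * t)) ≤ 2 / γ := by
    have := exp_pos (-(γ / 2) * t)
    exact mul_le_of_le_one_right (by positivity) (by linarith)
  have e2 : 2 / (5 * γ) * exp (5 / 2 * γ * t - 3 / 2 * γ * T)
      ≤ 2 / γ * exp (γ * t - γ * (T - t)) := by
    apply mul_le_mul _ (exp_le_exp.2 _) (exp_pos _).le (by positivity)
    · gcongr; linarith
    · nlinarith [mul_nonneg hγ.le (sub_nonneg.2 ht.2)]
  have e3 : exp (γ * t) * ‖s t‖ ≤ exp (γ * t) *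
      ((1 + 2 * K / γ) * (exp (-(γ * t)) + exp (-(γ * (T - t))))) := by
    calc exp (γ * t) * ‖s t‖ ≤ 1 + K * (2 / γ + 2 / γ * exp (γ * t - γ * (T - t))) :=
          h.trans (by gcongr)
      _ ≤ (1 + 2 * K / γ) * (1 + exp (γ * t - γ * (T - t))) := by
          have := exp_pos (γ * t - γ * (T - t))
          have e : K * (2 / γ + 2 / γ * exp (γ * t - γ * (T - t))) =
            2 * K / γ * (1 + exp (γ * t - γ * (T - t))) := by ring
          rw [e]
          linarith
      _ = _ := by
          rw [mul_left_comm, mul_add (exp _), ← exp_add, ← exp_add]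
          simp [sub_eq_add_neg]
  exact le_of_mul_le_mul_left e3 (exp_pos _)

theorem norm_add_norm_le {γ δ₁ δ₂ K T : ℝ} {s u n m : ℝ → ℂ} (hγ : 0 < γ) (hK : 0 ≤ K)
    (hs : ∀ t ∈ Set.Icc 0 T, HasDerivAt s ((-γ + δ₁ * Complex.I) * s t + n t) t)
    (hu : ∀ t ∈ Set.Icc 0 T, HasDerivAt u ((γ + δ₂ * Complex.I) * u t + m t) t)
    (hn : ∀ t ∈ Set.Icc 0 T, ‖n t‖ ≤ γ / 7 * (‖s t‖ + ‖u t‖))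
    (hm : ∀ t ∈ Set.Icc 0 T, ‖m t‖ ≤ γ / 7 * (‖s t‖ + ‖u t‖))
    (hn2 : ∀ t ∈ Set.Icc 0 T, ‖n t‖ ≤ K * (‖s t‖ + ‖u t‖) ^ 2)
    (hm2 : ∀ t ∈ Set.Icc 0 T, ‖m t‖ ≤ K * (‖s t‖ + ‖u t‖) ^ 2)
    (hs0 : ‖s 0‖ ≤ 1) (huT : ‖u T‖ ≤ 1) {t : ℝ} (ht : t ∈ Set.Icc 0 T) :
    ‖s t‖ + ‖u t‖ ≤ 2 * (1 + 8 * K / γ) * (exp (-(γ * t)) + exp (-(γ * (T - t)))) := by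
  have hrev : ∀ τ ∈ Set.Icc 0 T, T - τ ∈ Set.Icc 0 T := fun τ hτ =>
    ⟨by linarith [hτ.2], by linarith [hτ.1]⟩
  have hsq : ∀ τ ∈ Set.Icc 0 T, K * (‖s τ‖ + ‖u τ‖) ^ 2 ≤
      4 * K * (exp (-(3 / 2 * γ * τ)) + exp (-(3 / 2 * γ * (T - τ)))) := by
    intro τ hτ
    have h := norm_sq_add_norm_sq_le hγ hs hu hn hm hs0 huT hτ
    rw [mul_comm 4 K, mul_assoc]
    refine mul_le_mul_of_nonneg_left ?_ hK
    nlinarith [sq_nonneg (‖s τ‖ - ‖u τ‖)]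
  have h1 := norm_stable_le hγ (by positivity) hs (fun τ hτ => (hn2 τ hτ).trans (hsq τ hτ)) hs0 ht
  have h2 := norm_stable_le (K := 4 * K) (T := T) (s := fun τ => u (T - τ))
    (n := fun τ => -m (T - τ))
    (δ := -δ₂) hγ (by positivity)
    (fun τ hτ => ((hu _ (hrev τ hτ)).comp_const_sub T τ).congr_deriv (by push_cast; ring))
    (fun τ hτ => by
      have := (hm2 _ (hrev τ hτ)).trans (hsq _ (hrev τ hτ))
      rwa [sub_sub_cancel, add_comm (exp _), ← norm_neg] at this)
    (by simpa using huT) (hrev t ht)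
  simp only [sub_sub_cancel] at h2
  have e : 2 * (4 * K) / γ = 8 * K / γ := by ring
  rw [e] at h1 h2
  linarith

theorem stmt8 (F : EuclideanSpace ℝ (Fin 4) → EuclideanSpace ℝ (Fin 4))
    (hF : ContDiff ℝ 4 F) (x₀ : EuclideanSpace ℝ (Fin 4)) (hfix : F x₀ = 0)
    (γ δ : ℝ) (hγ : 0 < γ) (hδ : δ ≠ 0)
    -- the complexification of DF(x₀) has exactly the four simple eigenvalues ±γ ± δi
    (hspec :
      (((LinearMap.toMatrix (EuclideanSpace.basisFun (Fin 4) ℝ).toBasis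
            (EuclideanSpace.basisFun (Fin 4) ℝ).toBasis
            (fderiv ℝ F x₀).toLinearMap).map (fun r : ℝ => (r : ℂ))).charpoly).roots =
        {(γ : ℂ) + δ * Complex.I, (γ : ℂ) - δ * Complex.I,
          -(γ : ℂ) + δ * Complex.I, -(γ : ℂ) - δ * Complex.I}) :
    ∀ lam : ℝ, 0 < lam → lam ≤ γ →
    ∃ C > (0:ℝ), ∃ T₀ > (0:ℝ), ∃ R > (0:ℝ), ∀ T : ℝ, T > T₀ →
      ∀ x : ℝ → EuclideanSpace ℝ (Fin 4),
        (∀ t ∈ Set.Icc (0:ℝ) T, HasDerivAt x (F (x t)) t) →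
        (∀ t ∈ Set.Icc (0:ℝ) T, x t ∈ Metric.ball x₀ R) →
        (∀ t ∈ Set.Icc (lam * T / (2 * γ)) (T - lam * T / (2 * γ)),
          ‖x t - x₀‖ ≤ C * Real.exp (-lam * T / 2)) ∧
        (lam = γ → ‖x (T / 2) - x₀‖ ≤ C * Real.exp (-γ * T / 2)) := by
  intro lam hlam _
  obtain ⟨p, q, hp, hq, c, hc, hpq⟩ := exists_spectral_coordinates (fderiv ℝ F x₀)
    (μ := -(γ : ℂ) + δ * Complex.I) (ν := (γ : ℂ) + δ * Complex.I)
    (by rw [hspec]; simp) (by rw [hspec]; simp) (by simpa) (by simpa)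
    (by simp; linarith)
  obtain ⟨K, hK, r, hr, htaylor⟩ :=
    ContDiffAt.exists_norm_sub_le_sq (hF.contDiffAt.of_le (by norm_num) : ContDiffAt ℝ 2 F x₀)
  set P := ‖p‖ + ‖q‖ + 1 with hPdef
  have hP : 0 < P := by positivity
  have hpP : ∀ y, ‖p y‖ ≤ P * ‖y‖ := fun y => (p.le_opNorm y).trans
    (mul_le_mul_of_nonneg_right (by linarith [norm_nonneg q]) (norm_nonneg y))
  have hqP : ∀ y, ‖q y‖ ≤ P * ‖y‖ := fun y => (q.le_opNorm y).trans
    (mul_le_mul_of_nonneg_right (by linarith [norm_nonneg p]) (norm_nonneg y))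
  set R := min r (min (1 / P) (γ / (7 * (P * K * c + 1)))) with hR
  have hRpos : 0 < R := by positivity
  have hRP : P * R ≤ 1 := by
    have : R ≤ 1 / P := (min_le_right _ _).trans (min_le_left _ _)
    rwa [le_div_iff₀' hP] at this
  have hRγ : P * K * c * R ≤ γ / 7 := by
    have : R ≤ γ / (7 * (P * K * c + 1)) := (min_le_right _ _).trans (min_le_right _ _)
    rw [le_div_iff₀' (by positivity)] at this
    nlinarith
  set D := c * (2 * (1 + 8 * (P * K * c ^ 2) / γ)) with hD
  refine ⟨D * 2, by positivity, 1, one_pos, R, hRpos, ?_⟩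
  intro T hT x hx hball
  have hT0 : 0 < T := by linarith
  have hy : ∀ t ∈ Set.Icc 0 T, ‖x t - x₀‖ ≤ R := fun t ht => by
    simpa [dist_eq_norm] using (Metric.mem_ball.1 (hball t ht)).le
  let N : ℝ → EuclideanSpace ℝ (Fin 4) := fun t => F (x t) - fderiv ℝ F x₀ (x t - x₀)
  have hder : ∀ (l : EuclideanSpace ℝ (Fin 4) →L[ℝ] ℂ) (μ : ℂ),
      (∀ y, l (fderiv ℝ F x₀ y) = μ * l y) → ∀ t ∈ Set.Icc 0 T,
      HasDerivAt (fun τ => l (x τ - x₀)) (μ * l (x t - x₀) + l (N t)) t := by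
    intro l μ hl t ht
    refine (l.hasFDerivAt.comp_hasDerivAt t ((hx t ht).sub_const x₀)).congr_deriv ?_
    rw [← hl, ← map_add]
    simp [N]
  have hN : ∀ t ∈ Set.Icc 0 T, ‖N t‖ ≤ K * ‖x t - x₀‖ ^ 2 := fun t ht => by
    have h := htaylor (x t) (Metric.ball_subset_ball (min_le_left _ _) (hball t ht))
    rwa [hfix, sub_zero] at h
  have hlin : ∀ l : EuclideanSpace ℝ (Fin 4) →L[ℝ] ℂ, (∀ y, ‖l y‖ ≤ P * ‖y‖) →
      ∀ t ∈ Set.Icc 0 T, ‖l (N t)‖ ≤ γ / 7 * (‖p (x t - x₀)‖ + ‖q (x t - x₀)‖) := by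
    intro l hl t ht
    have h1 := hy t ht
    have h2 := hpq (x t - x₀)
    calc ‖l (N t)‖ ≤ P * (K * ‖x t - x₀‖ ^ 2) :=
          (hl _).trans (mul_le_mul_of_nonneg_left (hN t ht) hP.le)
      _ = P * K * (‖x t - x₀‖ * ‖x t - x₀‖) := by ring
      _ ≤ P * K * (R * (c * (‖p (x t - x₀)‖ + ‖q (x t - x₀)‖))) := by gcongr
      _ = P * K * c * R * (‖p (x t - x₀)‖ + ‖q (x t - x₀)‖) := by ring
      _ ≤ _ := by gcongr
  have hquad : ∀ l : EuclideanSpace ℝ (Fin 4) →L[ℝ] ℂ, (∀ y, ‖l y‖ ≤ P * ‖y‖) →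
      ∀ t ∈ Set.Icc 0 T,
        ‖l (N t)‖ ≤ P * K * c ^ 2 * (‖p (x t - x₀)‖ + ‖q (x t - x₀)‖) ^ 2 := by
    intro l hl t ht
    have h2 := hpq (x t - x₀)
    calc ‖l (N t)‖ ≤ P * (K * ‖x t - x₀‖ ^ 2) :=
          (hl _).trans (mul_le_mul_of_nonneg_left (hN t ht) hP.le)
      _ ≤ P * (K * (c * (‖p (x t - x₀)‖ + ‖q (x t - x₀)‖)) ^ 2) := by gcongr
      _ = _ := by ring
  have hsmall : ∀ l : EuclideanSpace ℝ (Fin 4) →L[ℝ] ℂ, (∀ y, ‖l y‖ ≤ P * ‖y‖) →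
      ∀ t ∈ Set.Icc 0 T, ‖l (x t - x₀)‖ ≤ 1 := fun l hl t ht =>
    (hl _).trans ((mul_le_mul_of_nonneg_left (hy t ht) hP.le).trans hRP)
  have hdecay : ∀ t ∈ Set.Icc 0 T,
      ‖x t - x₀‖ ≤ D * (exp (-(γ * t)) + exp (-(γ * (T - t)))) := by
    intro t ht
    have h := norm_add_norm_le hγ (by positivity) (hder p _ hp) (hder q _ hq) (hlin p hpP)
      (hlin q hqP) (hquad p hpP) (hquad q hqP) (hsmall p hpP 0 (Set.left_mem_Icc.2 hT0.le))
      (hsmall q hqP T (Set.right_mem_Icc.2 hT0.le)) ht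
    rw [hD, mul_assoc]
    exact (hpq _).trans (mul_le_mul_of_nonneg_left h hc.le)
  have hmain : ∀ t ∈ Set.Icc (lam * T / (2 * γ)) (T - lam * T / (2 * γ)),
      ‖x t - x₀‖ ≤ D * 2 * exp (-lam * T / 2) := by
    intro t ht
    have h0 : 0 ≤ lam * T / (2 * γ) := by positivity
    have e : γ * (lam * T / (2 * γ)) = lam * T / 2 := by field_simp
    have h1 : exp (-(γ * t)) ≤ exp (-lam * T / 2) := by
      have := mul_le_mul_of_nonneg_left ht.1 hγ.le
      exact exp_le_exp.2 (by linarith)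
    have h2 : exp (-(γ * (T - t))) ≤ exp (-lam * T / 2) := by
      have := mul_le_mul_of_nonneg_left ht.2 hγ.le
      exact exp_le_exp.2 (by linarith)
    have hDpos : 0 ≤ D := by positivity
    refine (hdecay t ⟨by linarith [ht.1], by linarith [ht.2]⟩).trans ?_
    rw [mul_assoc D 2]
    exact mul_le_mul_of_nonneg_left (by linarith) hDpos
  refine ⟨hmain, ?_⟩
  rintro rfl
  have e : lam * T / (2 * lam) = T / 2 := by field_simp
  exact hmain _ (by rw [e]; constructor <;> linarith)
end
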